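/- Let X ⊆ P^4_K be a generic projection of the Veronese surface F ⊆ P^5_K, i.e., the projection of F from a point P ∈ P^5_K \ F at which the generic symmetric 3×3 matrix M defining F has rank 3. Then X is a non-degenerate surface of degree 4 and codimension 2 with depth A_X = 1, the defining ideal I_X contains no quadric, and the Betti diagram of I_X has exactly the entries β_{1,2} = 7, β_{2,2} = 10, β_{3,2} = 5, β_{4,2} = 1, with all other entries β_{i,j} (i ≥ 1) equal to zero. -/

import Mathlib

noncomputable section

open MvPolynomial

/-- The polynomial ring `S = K[x_0, …, x_r]`, the homogeneous coordinate ring of `ℙ^r_K`. -/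
abbrev PS (K : Type) [Field K] (r : ℕ) : Type := MvPolynomial (Fin (r + 1)) K

namespace AMD

variable (K : Type) [Field K] (r : ℕ)

/-- `I` is a homogeneous ideal of `S = K[x_0, …, x_r]`. -/
def IsHomIdeal (I : Ideal (PS K r)) : Prop :=
  ∀ p ∈ I, ∀ n : ℕ, homogeneousComponent n p ∈ I

/-- `X = V_+(I)` is non-degenerate: `I` contains no nonzero linear form. -/
def Nondeg (I : Ideal (PS K r)) : Prop :=
  ∀ p ∈ I, p.IsHomogeneous 1 → p = 0

/-- The irrelevant maximal ideal of the homogeneous coordinate ring `A_X = S/I`. -/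
def maxIdl (I : Ideal (PS K r)) : Ideal (PS K r ⧸ I) :=
  (Ideal.span (Set.range (X : Fin (r + 1) → PS K r))).map (Ideal.Quotient.mk I)

/-- `dim X = d`, i.e. the Krull dimension of `A_X = S/I` equals `d + 1`. -/
def DimEq (I : Ideal (PS K r)) (d : ℕ) : Prop :=
  ringKrullDim (PS K r ⧸ I) = (((d : ℕ∞) + 1 : ℕ∞) : WithBot ℕ∞)

/-- The degree-`n` homogeneous component of `A_X = S/I`, as a `K`-subspace. -/
def quotComponent (I : Ideal (PS K r)) (n : ℕ) : Submodule K (PS K r ⧸ I) :=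
  (homogeneousSubmodule (Fin (r + 1)) K n).map (Ideal.Quotient.mkₐ K I).toLinearMap

/-- The Hilbert series of the graded algebra `A_X = S/I`. -/
def hilbSeries (I : Ideal (PS K r)) : PowerSeries ℤ :=
  PowerSeries.mk fun n => (Module.finrank K (quotComponent K r I n) : ℤ)

/-- `deg X = e`, where `d = dim X`:  the numerator polynomial of the Hilbert series of
`A_X` with respect to the denominator `(1 - λ)^(d+1)` takes the value `e` at `λ = 1`. -/
def DegreeEq (I : Ideal (PS K r)) (d e : ℕ) : Prop :=
  ∃ h : Polynomial ℤ,
    hilbSeries K r I * (1 - PowerSeries.X) ^ (d + 1) = PowerSeries.mk (fun n => h.coeff n) ∧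
    h.eval 1 = (e : ℤ)

/-- A graded automorphism of `S`, i.e. a linear change of coordinates of `ℙ^r_K`. -/
def IsGrAut (φ : PS K r ≃ₐ[K] PS K r) : Prop :=
  ∀ i, (φ (X i)).IsHomogeneous 1

/-- `X = V_+(I) ⊆ ℙ^r_K` is a cone (over a variety lying in some hyperplane): after a
linear change of coordinates, `I` is generated by polynomials not involving the last
variable. -/
def IsConeIdeal (I : Ideal (PS K r)) : Prop :=
  ∃ φ : PS K r ≃ₐ[K] PS K r, IsGrAut K r φ ∧
    ∃ J : Ideal (MvPolynomial (Fin r) K),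
      Ideal.map φ I = Ideal.map (rename (Fin.castSucc : Fin r → Fin (r + 1))) J

/-- A (weakly) regular sequence on the ring `A`. -/
def IsRegSeq {A : Type} [CommRing A] (rs : List A) : Prop :=
  ∀ (i : Fin rs.length) (y : A),
    rs.get i * y ∈ Ideal.span {x | x ∈ rs.take i.1} → y ∈ Ideal.span {x | x ∈ rs.take i.1}

/-- `depth A_X = t`: the maximal length of a regular sequence on `A_X = S/I` consisting
of elements of the irrelevant maximal ideal is `t`. -/
def DepthEq (I : Ideal (PS K r)) (t : ℕ) : Prop :=
  (∃ rs : List (PS K r ⧸ I), rs.length = t ∧ (∀ x ∈ rs, x ∈ maxIdl K r I) ∧ IsRegSeq rs) ∧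
  ∀ rs : List (PS K r ⧸ I), (∀ x ∈ rs, x ∈ maxIdl K r I) → IsRegSeq rs → rs.length ≤ t

/-- `X` is arithmetically Cohen-Macaulay: `depth A_X = dim A_X`. -/
def IsACM (I : Ideal (PS K r)) : Prop :=
  ∃ t : ℕ, ringKrullDim (PS K r ⧸ I) = ((t : ℕ∞) : WithBot ℕ∞) ∧ DepthEq K r I t

/-- The socle `{y | m·y = 0}` of `B`, as a `K`-subspace of `B`. -/
def socle (B : Type) [CommRing B] [Algebra K B] (m : Ideal B) : Submodule K B where
  carrier := {y | ∀ z ∈ m, z * y = 0}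
  add_mem' := by
    intro a b ha hb z hz
    rw [mul_add, ha z hz, hb z hz, add_zero]
  zero_mem' := by
    intro z hz
    rw [mul_zero]
  smul_mem' := by
    intro c y hy z hz
    rw [mul_smul_comm, hy z hz, smul_zero]

/-- `X` is arithmetically Gorenstein: `A_X = S/I` is Cohen-Macaulay and its Artinian
reduction by a maximal regular sequence has a one-dimensional socle. -/
def IsArithGorenstein (I : Ideal (PS K r)) : Prop :=
  ∃ (t : ℕ) (rs : List (PS K r ⧸ I)),
    ringKrullDim (PS K r ⧸ I) = ((t : ℕ∞) : WithBot ℕ∞) ∧ rs.length = t ∧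
    (∀ x ∈ rs, x ∈ maxIdl K r I) ∧ IsRegSeq rs ∧
    Module.finrank K
      (socle K ((PS K r ⧸ I) ⧸ Ideal.span {x | x ∈ rs})
        (Ideal.map (Ideal.Quotient.mk (Ideal.span {x | x ∈ rs})) (maxIdl K r I))) = 1

/-- The graded free `S`-module with `β j` generators in "row `j`" for each `j : ℕ`. -/
abbrev FreeGr (β : ℕ → ℕ) : Type := ((j : ℕ) × Fin (β j)) →₀ PS K r

/-- `φ` is a minimal graded homomorphism of graded free modules, where the generator
`(j, t)` of the source has degree `m₁ + j` and the generator `(j', t')` of the target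
has degree `m₂ + j'`: every matrix entry of `φ` is either zero or homogeneous of the
appropriate positive degree. -/
def IsMinGrMap (b₁ b₂ : ℕ → ℕ) (m₁ m₂ : ℕ)
    (φ : FreeGr K r b₁ →ₗ[PS K r] FreeGr K r b₂) : Prop :=
  ∀ (j : ℕ) (t : Fin (b₁ j)) (j' : ℕ) (t' : Fin (b₂ j')),
    (φ (Finsupp.single ⟨j, t⟩ 1)) ⟨j', t'⟩ = 0 ∨
      ∃ dd : ℕ, 1 ≤ dd ∧ dd + (m₂ + j') = m₁ + j ∧
        ((φ (Finsupp.single ⟨j, t⟩ 1)) ⟨j', t'⟩).IsHomogeneous dd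

/-- `b` is the Betti diagram of the ideal `I ⊆ S`, i.e.
`b i j = dim_K Tor_i^S(K, S/I)_{i+j}` for all `i ≥ 1`.  This is expressed by the
existence of a minimal graded free resolution `⋯ → F₂ → F₁ → S → S/I → 0` of `S/I`
in which, for `i ≥ 1`, the free module `F_i` has exactly `b i j` generators of degree
`i + j`. -/
def HasBettiDiagram (I : Ideal (PS K r)) (b : ℕ → ℕ → ℕ) : Prop :=
  ∃ (φ : (i : ℕ) → (FreeGr K r (b (i + 2)) →ₗ[PS K r] FreeGr K r (b (i + 1))))
    (ε : FreeGr K r (b 1) →ₗ[PS K r] PS K r),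
    (∀ (j : ℕ) (t : Fin (b 1 j)), (ε (Finsupp.single ⟨j, t⟩ 1)).IsHomogeneous (1 + j)) ∧
    (∀ i, IsMinGrMap K r (b (i + 2)) (b (i + 1)) (i + 2) (i + 1) (φ i)) ∧
    LinearMap.range ε = I ∧
    LinearMap.ker ε = LinearMap.range (φ 0) ∧
    ∀ i, LinearMap.ker (φ i) = LinearMap.range (φ (i + 1))

/-- The Pfaffian of a (skew-symmetric) `4 × 4` matrix. -/
def pfaff4 {R : Type} [CommRing R] (N : Matrix (Fin 4) (Fin 4) R) : R :=
  N 0 1 * N 2 3 - N 0 2 * N 1 3 + N 0 3 * N 1 2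

/-- The five submaximal (`4 × 4`) Pfaffians of a skew-symmetric `5 × 5` matrix. -/
def subPfaffian {R : Type} [CommRing R] (M : Matrix (Fin 5) (Fin 5) R) (i : Fin 5) : R :=
  pfaff4 (M.submatrix i.succAbove i.succAbove)

/-- `X = V_+(I)` is the Pfaffian variety defined by the five `4 × 4` Pfaffians of a
skew-symmetric `5 × 5` matrix of linear forms. -/
def IsPfaffianVariety (I : Ideal (PS K r)) : Prop :=
  ∃ M : Matrix (Fin 5) (Fin 5) (PS K r),
    M.transpose = -M ∧ (∀ i j, (M i j).IsHomogeneous 1) ∧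
    I = Ideal.span (Set.range (subPfaffian M))

/-- The vanishing ideal of the coordinate point `(0 : ⋯ : 0 : 1) ∈ ℙ^{r+1}_K`. -/
def pointIdl : Ideal (PS K (r + 1)) :=
  Ideal.span ((X : Fin (r + 2) → PS K (r + 1)) '' {i : Fin (r + 2) | i ≠ Fin.last (r + 1)})

/-- `X = V_+(I) ⊆ ℙ^r_K` is the image of `Z = V_+(J) ⊆ ℙ^{r+1}_K` under the projection
from a point `P ∈ ℙ^{r+1}_K ∖ Z`: after a linear change of coordinates moving `P` to
`(0 : ⋯ : 0 : 1)`, the ideal `I` is the contraction of `J` to `K[x_0, …, x_r]`. -/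
def IsProjectionOf (I : Ideal (PS K r)) (J : Ideal (PS K (r + 1))) : Prop :=
  ∃ ψ : PS K (r + 1) ≃ₐ[K] PS K (r + 1), IsGrAut K (r + 1) ψ ∧
    ¬ Ideal.map ψ J ≤ pointIdl K r ∧
    I = Ideal.comap (rename (Fin.castSucc : Fin (r + 1) → Fin (r + 2))) (Ideal.map ψ J)

/-- The ideal of the Veronese surface `F ⊆ ℙ^5_K`, generated by the `2 × 2` minors of
the generic symmetric `3 × 3` matrix with rows `(x₀,x₁,x₂), (x₁,x₃,x₄), (x₂,x₄,x₅)`. -/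
def veroneseIdeal : Ideal (PS K 5) :=
  Ideal.span {X 0 * X 3 - X 1 * X 1, X 0 * X 4 - X 1 * X 2, X 1 * X 4 - X 2 * X 3,
    X 0 * X 5 - X 2 * X 2, X 1 * X 5 - X 2 * X 4, X 3 * X 5 - X 4 * X 4}

/-- The determinant of the generic symmetric `3 × 3` matrix defining the Veronese
surface; it cuts out the secant variety of `F ⊆ ℙ^5_K`. -/
def veroneseDet : PS K 5 :=
  X 0 * X 3 * X 5 - X 0 * X 4 * X 4 - X 1 * X 1 * X 5 + 2 * (X 1 * X 2 * X 4) -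
    X 2 * X 2 * X 3

/-- `X = V_+(I) ⊆ ℙ^4_K` is a generic projection of the Veronese surface `F ⊆ ℙ^5_K`,
i.e. the projection of `F` from a point `P ∈ ℙ^5_K ∖ F` at which the generic symmetric
`3 × 3` matrix `M` has rank `3` (equivalently, `P` does not lie on the secant variety
`{det M = 0}` of `F`). -/
def IsGenProjVeronese4 (I : Ideal (PS K 4)) : Prop :=
  ∃ ψ : PS K 5 ≃ₐ[K] PS K 5, IsGrAut K 5 ψ ∧
    ¬ Ideal.map ψ (Ideal.span {veroneseDet K}) ≤ pointIdl K 4 ∧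
    I = Ideal.comap (rename (Fin.castSucc : Fin 5 → Fin 6)) (Ideal.map ψ (veroneseIdeal K))

/-- `X = V_+(I) ⊆ ℙ^r_K` is a generic projection of the Veronese surface (which forces
`r = 4`). -/
def IsGenProjVeronese (I : Ideal (PS K r)) : Prop :=
  ∃ h : r + 1 = 5, IsGenProjVeronese4 K (Ideal.map (rename (Fin.cast h)) I)

/-- `X = V_+(I) ⊆ ℙ^r_K` is a generic projection of (a cone over) the Veronese surface
`F ⊆ ℙ^5_K`:  `X` is the projection of a cone `Z ⊆ ℙ^{r+1}_K` over `F` from a point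
not lying on the (cone over the) secant variety of `F`. -/
def IsGenProjVeroneseCone (I : Ideal (PS K r)) : Prop :=
  ∃ (h : 6 ≤ r + 2) (ψ : PS K (r + 1) ≃ₐ[K] PS K (r + 1)), IsGrAut K (r + 1) ψ ∧
    ¬ Ideal.map ψ (Ideal.map (rename (Fin.castLE h))
        (Ideal.span {veroneseDet K})) ≤ pointIdl K r ∧
    I = Ideal.comap (rename (Fin.castSucc : Fin (r + 1) → Fin (r + 2)))
      (Ideal.map ψ (Ideal.map (rename (Fin.castLE h)) (veroneseIdeal K)))

/-- The ideal of the rational normal scroll `S(a_1, …, a_k)`, generated by the `2 × 2`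
minors of the standard `2 × (Σ a_i)` matrix of indeterminates. -/
def scrollIdeal (k : ℕ) (a : Fin k → ℕ) :
    Ideal (MvPolynomial ((i : Fin k) × Fin (a i + 1)) K) :=
  Ideal.span {p | ∃ (i : Fin k) (j : Fin (a i)) (i' : Fin k) (j' : Fin (a i')),
    p = X ⟨i, j.castSucc⟩ * X ⟨i', j'.succ⟩ - X ⟨i, j.succ⟩ * X ⟨i', j'.castSucc⟩}

/-- The affine cone in `K^{r+2}` of the projective scheme `V_+(J) ⊆ ℙ^{r+1}_K`. -/
def zeroSet (J : Ideal (PS K (r + 1))) : Set (Fin (r + 2) → K) :=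
  {v | ∀ f ∈ J, MvPolynomial.eval v f = 0}

/-- Restriction of polynomials to the plane spanned by the vectors `p` and `q`
(i.e. to the line through the corresponding projective points). -/
def lineRestrict (p q : Fin (r + 2) → K) : PS K (r + 1) →ₐ[K] MvPolynomial (Fin 2) K :=
  aeval fun i => MvPolynomial.C (p i) * X 0 + MvPolynomial.C (q i) * X 1

/-- The line through the (independent) points `p`, `q` is a secant line of
`Z = V_+(J)`: the scheme `Z ∩ L ⊆ L ≅ ℙ^1` has length at least `2`, i.e. the
restriction of `J` to the line is contained in a principal ideal generated by a
form of degree `≥ 2` (or is zero, in which case `L ⊆ Z`). -/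
def IsSecantLine (J : Ideal (PS K (r + 1))) (p q : Fin (r + 2) → K) : Prop :=
  ∃ h : MvPolynomial (Fin 2) K,
    (∀ f ∈ J, lineRestrict K r p q f ∈ Ideal.span {h}) ∧
    (h = 0 ∨ ∃ dd : ℕ, 2 ≤ dd ∧ h.IsHomogeneous dd)

/-- The (affine cone over the) secant cone `Sec_P(Z)` of `Z = V_+(J)` with respect to
the point `P = [p]`: the union of `{P}` and of all secant lines of `Z` through `P`. -/
def secantCone (J : Ideal (PS K (r + 1))) (p : Fin (r + 2) → K) : Set (Fin (r + 2) → K) :=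
  {v | ∃ a : K, v = a • p} ∪
    {v | ∃ q : Fin (r + 2) → K, LinearIndependent K ![p, q] ∧ IsSecantLine K r J p q ∧
      ∃ a b : K, v = a • p + b • q}

/-- The (homogeneous) vanishing ideal of a subset of the affine cone `K^{r+2}`. -/
def vanishingIdl (T : Set (Fin (r + 2) → K)) : Ideal (PS K (r + 1)) where
  carrier := {f | ∀ v ∈ T, MvPolynomial.eval v f = 0}
  add_mem' := by
    intro a b ha hb v hv
    rw [map_add, ha v hv, hb v hv, add_zero]
  zero_mem' := by
    intro v hv
    rw [map_zero]
  smul_mem' := by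
    intro c f hf v hv
    rw [smul_eq_mul, map_mul, hf v hv, mul_zero]

/-- `X = V_+(I) ⊆ ℙ^r_K` is the image of `Z = V_+(J) ⊆ ℙ^{r+1}_K` under the linear
projection `π : ℙ^{r+1}_K ∖ {P} → ℙ^r_K` from the point `P = [p]`:  `I` is the
contraction of `J` along the substitution homomorphism induced by a surjective linear
map `K^{r+2} → K^{r+1}` with kernel `K·p`. -/
def IsProjectionFromPoint (I : Ideal (PS K r)) (J : Ideal (PS K (r + 1)))
    (p : Fin (r + 2) → K) : Prop :=
  ∃ π : (Fin (r + 2) → K) →ₗ[K] (Fin (r + 1) → K),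
    Function.Surjective π ∧ LinearMap.ker π = Submodule.span K {p} ∧
    I = Ideal.comap
      (aeval (fun j : Fin (r + 1) =>
        ∑ i : Fin (r + 2), MvPolynomial.C (π (Pi.single i 1) j) * X i) :
          PS K r →ₐ[K] PS K (r + 1)) J

end AMD

/- After a change of coordinates, valid in every characteristic, `X` is the image of `ℙ²` under the
five conics `s₀²`, `s₀s₁`, `s₀s₂ - s₁²`, `s₁s₂`, `s₂²`. Its coordinate ring is a subring of the even
part of `K[s₀, s₁, s₂]` that misses, up to scalars, only the conic `w = s₀s₂`; this gives dimension,
degree and depth. As `w` times the `i`-th conic is a quadric `qᵢ` in the five conics, the ideal of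
`X` is `{∑ aᵢqᵢ | ∑ aᵢxᵢ = 0}`. Such `a` are the image of the `Λ²` term of the Koszul complex of
`x₀, …, x₄`, where the common syzygies of `x` and `q` form a free module on three linear ones, by a
Hilbert-Burch argument. They split off a rank three summand of `Λ²`, and the ranks 10, 10, 5, 1 of
the Koszul complex become 7, 10, 5, 1. -/

section GramNormalForm

variable {K : Type*} [Field K]

open Matrix

lemma exists_isotropic [IsAlgClosed K] {V : Type*} [AddCommGroup V] [Module K V]
    (B : LinearMap.BilinForm K V) {u v : V} (huv : LinearIndependent K ![u, v]) :
    ∃ x, x ≠ 0 ∧ B x x = 0 := by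
  by_cases hu : B u u = 0
  · exact ⟨u, huv.ne_zero 0, hu⟩
  obtain ⟨r, hr⟩ := IsAlgClosed.exists_root
    (.C (B u u) * .X ^ 2 + .C (B u v + B v u) * .X + .C (B v v) : Polynomial K)
    (by rw [Polynomial.degree_quadratic hu]; norm_num)
  refine ⟨r • u + (1 : K) • v,
    fun h => one_ne_zero (LinearIndependent.pair_iff.mp huv r 1 h).2, ?_⟩
  simp only [Polynomial.IsRoot, Polynomial.eval_add, Polynomial.eval_mul, Polynomial.eval_C,
    Polynomial.eval_pow, Polynomial.eval_X] at hr
  simp only [map_add, map_smul, LinearMap.add_apply, LinearMap.smul_apply, smul_eq_mul]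
  linear_combination hr

lemma exists_toBilin'_eq_one {n : Type*} [Fintype n] [DecidableEq n] {P : Matrix n n K}
    (hP : P.det ≠ 0) {v : n → K} (hv : v ≠ 0) : ∃ w, P.toBilin' v w = 1 := by
  obtain ⟨i, hi⟩ := Function.ne_iff.mp hv
  refine ⟨P⁻¹ *ᵥ Pi.single i (v i)⁻¹, ?_⟩
  rw [toBilin'_apply', mulVec_mulVec, mul_nonsing_inv P hP.isUnit, one_mulVec, dotProduct_single,
    mul_inv_cancel₀ hi]

lemma transpose_mulVec_cross_mulVec {R : Type*} [CommRing R] (M : Matrix (Fin 3) (Fin 3) R)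
    (a b : Fin 3 → R) : Mᵀ *ᵥ crossProduct (M *ᵥ a) (M *ᵥ b) = M.det • crossProduct a b := by
  ext i
  fin_cases i <;>
    simp [cross_apply, mulVec, dotProduct, Fin.sum_univ_three, det_fin_three] <;> ring

/-- The Gram matrix of the quadratic form `2 x₀ x₂ + x₁²`, to which every nondegenerate symmetric
bilinear form in three variables can be brought, in any characteristic. -/
def antidiagonalGram (K : Type*) [Field K] : Matrix (Fin 3) (Fin 3) K :=
  !![0, 0, 1; 0, 1, 0; 1, 0, 0]

-- Complete an isotropic `a` and a dual vector `c` by a multiple `b` of the cross product of `P a`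
-- and `P c`, which is orthogonal to both; then shear along `b` to make `c` isotropic.
theorem exists_congr_antidiagonalGram [IsAlgClosed K] {P : Matrix (Fin 3) (Fin 3) K}
    (hsymm : P.IsSymm) (hdet : P.det ≠ 0) :
    ∃ N : Matrix (Fin 3) (Fin 3) K, N * P * Nᵀ = antidiagonalGram K := by
  set B := P.toBilin' with hB
  have hBsymm (x y) : B x y = B y x := by
    rw [hB, toBilin'_apply', toBilin'_apply', dotProduct_mulVec, ← mulVec_transpose, hsymm.eq,
      dotProduct_comm]
  obtain ⟨a, ha, haa⟩ := exists_isotropic B (u := Pi.single 0 1) (v := Pi.single 1 1)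
    (LinearIndependent.pair_iff.mpr fun s t h =>
      ⟨by simpa using congrFun h 0, by simpa using congrFun h 1⟩)
  obtain ⟨c, hac⟩ : ∃ c, B a c = 1 := exists_toBilin'_eq_one hdet ha
  obtain ⟨μ, hμ⟩ := IsAlgClosed.exists_pow_nat_eq (-P.det⁻¹) two_pos
  obtain ⟨β, hβ⟩ := IsAlgClosed.exists_pow_nat_eq (-B c c) two_pos
  set d := crossProduct (P *ᵥ a) (P *ᵥ c) with hd
  have hPd : P *ᵥ d = P.det • crossProduct a c := by
    rw [← transpose_mulVec_cross_mulVec, hsymm.eq]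
  have had : B a d = 0 := by
    rw [hB, toBilin'_apply', hPd, dotProduct_smul, dot_self_cross, smul_zero]
  have hcd : B c d = 0 := by
    rw [hB, toBilin'_apply', hPd, dotProduct_smul, dot_cross_self, smul_zero]
  have hdd : B d d = -P.det := by
    have h (x y) : (P *ᵥ x) ⬝ᵥ y = B x y := by
      rw [hBsymm, hB, toBilin'_apply', dotProduct_comm]
    rw [hB, toBilin'_apply', hPd, hd, dotProduct_smul, cross_dot_cross, h, h, h, h, haa, hac,
      hBsymm c a, hac]
    simp
  have hμd : μ * (μ * B d d) = 1 := by
    rw [← mul_assoc, ← pow_two, hdd, hμ, neg_mul_neg, inv_mul_cancel₀ hdet]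
  refine ⟨of ![a, μ • d - β • a, c + (β * μ) • d], ?_⟩
  ext i j
  have hentry (x : Fin 3 → Fin 3 → K) : (of x * P * (of x)ᵀ) i j = B (x i) (x j) := by
    rw [hB, toBilin'_apply', dotProduct_mulVec]; rfl
  have hda := (hBsymm d a).trans had
  have hdc := (hBsymm d c).trans hcd
  have hca := (hBsymm c a).trans hac
  rw [hentry]
  fin_cases i <;> fin_cases j <;>
    simp [antidiagonalGram, haa, hac, had, hda, hcd, hdc, hca, hμd] <;>
    grind

end GramNormalForm

section VeroneseParametrization

section Expand

variable {R σ ι : Type*} [CommSemiring R] {p : ℕ}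

lemma coeff_smul_add_monomial_mul_expand [DecidableEq σ] (hp : p ≠ 0) {e e' : σ →₀ ℕ}
    (he : ∀ i, e i < p) (he' : ∀ i, e' i < p) (m : σ →₀ ℕ) (f : MvPolynomial σ R) :
    coeff (p • m + e) (monomial e' 1 * expand p f) = if e' = e then coeff m f else 0 := by
  rw [coeff_monomial_mul', one_mul]
  split_ifs with hle heq heq
  · rw [heq, add_tsub_cancel_right, coeff_expand_smul _ hp]
  · obtain ⟨i, hi⟩ := DFunLike.ne_iff.mp heq
    refine coeff_expand_of_not_dvd f (i := i) fun ⟨n, hn⟩ => hi ?_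
    have hle' := hle i
    simp only [Finsupp.coe_tsub, Finsupp.coe_add, Finsupp.coe_smul, Pi.sub_apply, Pi.add_apply,
      Pi.smul_apply, smul_eq_mul] at hn hle'
    have hmod : e' i ≡ e i [MOD p] := by
      have h : p * m i + e i = p * n + e' i := by omega
      have := congrArg (· % p) h
      simpa [Nat.ModEq] using this.symm
    exact hmod.eq_of_lt_of_lt (he' i) (he i)
  · exact absurd (heq ▸ le_add_self) hle
  · rfl

theorem eq_zero_of_sum_monomial_mul_expand_eq_zero [Fintype ι] (hp : p ≠ 0) {e : ι → σ →₀ ℕ}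
    (he : ∀ k i, e k i < p) (hinj : Function.Injective e) {a : ι → MvPolynomial σ R}
    (h : ∑ k, monomial (e k) 1 * expand p (a k) = 0) (k : ι) : a k = 0 := by
  classical
  ext m
  have hcoeff := congrArg (coeff (p • m + e k)) h
  simp only [coeff_sum, coeff_smul_add_monomial_mul_expand hp (he k) (he _)] at hcoeff
  simpa [hinj.eq_iff] using hcoeff

end Expand

lemma eq_zero_of_expand_two_combination {R : Type*} [CommSemiring R]
    {a b c d : MvPolynomial (Fin 3) R}
    (h : expand 2 a + X 0 * X 1 * expand 2 b + X 0 * X 2 * expand 2 c +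
      X 1 * X 2 * expand 2 d = 0) :
    a = 0 ∧ b = 0 ∧ c = 0 ∧ d = 0 := by
  let e : Fin 4 → (Fin 3 →₀ ℕ) := ![0, .single 0 1 + .single 1 1, .single 0 1 + .single 2 1,
    .single 1 1 + .single 2 1]
  have he (k i) : e k i < 2 := by fin_cases k <;> fin_cases i <;> simp [e]
  have hinj : Function.Injective e := fun k l hkl => by
    have hval := DFunLike.congr_fun hkl
    fin_cases k <;> fin_cases l <;> first | rfl | simp [e, Fin.forall_fin_succ] at hval
  have hsum : ∑ k, monomial (e k) 1 * expand 2 (![a, b, c, d] k) = 0 := by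
    simpa [Fin.sum_univ_four, e, X, monomial_mul] using h
  have hzero := eq_zero_of_sum_monomial_mul_expand_eq_zero two_ne_zero he hinj hsum
  exact ⟨hzero 0, hzero 1, hzero 2, hzero 3⟩

variable (K : Type) [Field K]

/-- The parametrization `x_{ij} ↦ X i * X j` of the Veronese surface by `ℙ²`. -/
def veroneseMap : PS K 5 →ₐ[K] MvPolynomial (Fin 3) K :=
  aeval ![X 0 * X 0, X 0 * X 1, X 0 * X 2, X 1 * X 1, X 1 * X 2, X 2 * X 2]

/-- The inclusion of the polynomial ring in the diagonal coordinates `x₀, x₃, x₅`, over which the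
coordinate ring of the Veronese surface is free with basis `1, x₁, x₂, x₄`. -/
def diagonalCoordinates : MvPolynomial (Fin 3) K →ₐ[K] PS K 5 :=
  aeval ![X 0, X 3, X 5]

variable {K}

lemma veroneseMap_diagonalCoordinates (a : MvPolynomial (Fin 3) K) :
    veroneseMap K (diagonalCoordinates K a) = expand 2 a := by
  suffices (veroneseMap K).comp (diagonalCoordinates K) = expand 2 from DFunLike.congr_fun this a
  ext1 i
  fin_cases i <;> simp [veroneseMap, diagonalCoordinates, pow_two]

lemma veroneseIdeal_le_iff {J : Ideal (PS K 5)} :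
    AMD.veroneseIdeal K ≤ J ↔ X 0 * X 3 - X 1 * X 1 ∈ J ∧ X 0 * X 4 - X 1 * X 2 ∈ J ∧
      X 1 * X 4 - X 2 * X 3 ∈ J ∧ X 0 * X 5 - X 2 * X 2 ∈ J ∧ X 1 * X 5 - X 2 * X 4 ∈ J ∧
      X 3 * X 5 - X 4 * X 4 ∈ J := by
  simp [AMD.veroneseIdeal, Ideal.span_le, Set.insert_subset_iff]

lemma veroneseIdeal_le_ker : AMD.veroneseIdeal K ≤ RingHom.ker (veroneseMap K) := by
  rw [veroneseIdeal_le_iff]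
  refine ⟨?_, ?_, ?_, ?_, ?_, ?_⟩ <;> simp [RingHom.mem_ker, veroneseMap] <;> ring

lemma exists_veronese_normalForm (f : PS K 5) :
    ∃ a b c d : MvPolynomial (Fin 3) K,
      f - (diagonalCoordinates K a + X 1 * diagonalCoordinates K b +
        X 2 * diagonalCoordinates K c + X 4 * diagonalCoordinates K d) ∈ AMD.veroneseIdeal K := by
  set τ := diagonalCoordinates K with hτ
  set q := Ideal.Quotient.mk (AMD.veroneseIdeal K)
  have hτ₀ : τ (X 0) = X 0 := by simp [hτ, diagonalCoordinates]
  have hτ₁ : τ (X 1) = X 3 := by simp [hτ, diagonalCoordinates]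
  have hτ₂ : τ (X 2) = X 5 := by simp [hτ, diagonalCoordinates]
  obtain ⟨h₁, h₂, h₃, h₄, h₅, h₆⟩ := veroneseIdeal_le_iff.mp (le_refl (AMD.veroneseIdeal K))
  simp only [← Ideal.Quotient.eq, map_add, map_mul] at h₁ h₂ h₃ h₄ h₅ h₆ ⊢
  induction f using MvPolynomial.induction_on with
  | C r => exact ⟨C r, 0, 0, 0, by simp [hτ, diagonalCoordinates]⟩
  | add f g hf hg =>
    obtain ⟨a, b, c, d, hf⟩ := hf
    obtain ⟨a', b', c', d', hg⟩ := hg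
    refine ⟨a + a', b + b', c + c', d + d', ?_⟩
    simp only [map_add, hf, hg]
    ring
  | mul_X f i hf =>
    obtain ⟨a, b, c, d, hf⟩ := hf
    simp only [map_mul, hf]
    match i with
    | 0 =>
      refine ⟨a * X 0, b * X 0, c * X 0, d * X 0, ?_⟩
      simp only [map_mul, hτ₀]
      ring
    | 1 =>
      refine ⟨b * X 0 * X 1, a, d * X 1, c * X 0, ?_⟩
      simp only [map_mul, hτ₀, hτ₁]
      linear_combination -q (τ b) * h₁ - q (τ c) * h₂ + q (τ d) * h₃
    | 2 =>
      refine ⟨c * X 0 * X 2, d * X 2, a, b * X 0, ?_⟩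
      simp only [map_mul, hτ₀, hτ₂]
      linear_combination -q (τ b) * h₂ - q (τ c) * h₄ - q (τ d) * h₅
    | 3 =>
      refine ⟨a * X 1, b * X 1, c * X 1, d * X 1, ?_⟩
      simp only [map_mul, hτ₁]
      ring
    | 4 =>
      refine ⟨d * X 1 * X 2, c * X 2, b * X 1, a, ?_⟩
      simp only [map_mul, hτ₁, hτ₂]
      linear_combination q (τ b) * h₃ - q (τ c) * h₅ - q (τ d) * h₆
    | 5 =>
      refine ⟨a * X 2, b * X 2, c * X 2, d * X 2, ?_⟩
      simp only [map_mul, hτ₂]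
      ring

theorem ker_veroneseMap : RingHom.ker (veroneseMap K) = AMD.veroneseIdeal K := by
  refine le_antisymm (fun f hf => ?_) veroneseIdeal_le_ker
  obtain ⟨a, b, c, d, hnormal⟩ := exists_veronese_normalForm f
  have himage : expand 2 a + X 0 * X 1 * expand 2 b + X 0 * X 2 * expand 2 c +
      X 1 * X 2 * expand 2 d = 0 := by
    have h := veroneseIdeal_le_ker hnormal
    rw [RingHom.mem_ker, map_sub, RingHom.mem_ker.mp hf, zero_sub, neg_eq_zero] at h
    simp only [map_add, map_mul, veroneseMap_diagonalCoordinates] at h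
    simpa [veroneseMap] using h
  obtain ⟨rfl, rfl, rfl, rfl⟩ := eq_zero_of_expand_two_combination himage
  simpa using hnormal

end VeroneseParametrization

section LinearSubstitution

/-- The automorphism of a polynomial ring that substitutes linear forms for the variables: row `i`
of `M` holds the coefficients of the image of `X i`. -/
def linearSubstEquiv {R ι : Type*} [CommRing R] [Fintype ι] [DecidableEq ι] (M : Matrix ι ι R)
    (hM : IsUnit M.det) : MvPolynomial ι R ≃ₐ[R] MvPolynomial ι R :=
  AlgEquiv.ofAlgHom (bind₁ M.toMvPolynomial) (bind₁ M⁻¹.toMvPolynomial)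
    (by ext1 i; simp [← Matrix.toMvPolynomial_mul, Matrix.nonsing_inv_mul M hM])
    (by ext1 i; simp [← Matrix.toMvPolynomial_mul, Matrix.mul_nonsing_inv M hM])

lemma toMvPolynomial_eq_sum_smul_X {R ι κ : Type*} [CommSemiring R] [Fintype κ]
    (M : Matrix ι κ R) (i : ι) : M.toMvPolynomial i = ∑ j, M i j • X j := by
  simp [Matrix.toMvPolynomial, smul_eq_C_mul, C_mul_X_eq_monomial]

lemma exists_algEquiv_of_linearIndependent {F ι : Type*} [Field F] [Finite ι]
    {ℓ : ι → MvPolynomial ι F} (hℓ : ∀ i, (ℓ i).IsHomogeneous 1) (hind : LinearIndependent F ℓ) :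
    ∃ σ : MvPolynomial ι F ≃ₐ[F] MvPolynomial ι F,
      (∀ i, σ (X i) = ℓ i) ∧ ∀ i, (σ.symm (X i)).IsHomogeneous 1 := by
  classical
  have := Fintype.ofFinite ι
  simp only [← mem_homogeneousSubmodule, homogeneousSubmodule_one_eq_span_X,
    Submodule.mem_span_range_iff_exists_fun] at hℓ
  choose M hM using hℓ
  have hrows : LinearIndependent F (Matrix.row M) :=
    .of_comp (Fintype.linearCombination F X) (by convert hind using 1; ext1 i; exact hM i)
  refine ⟨linearSubstEquiv M ((Matrix.isUnit_iff_isUnit_det M).mp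
    (Matrix.linearIndependent_rows_iff_isUnit.mp hrows)), fun i => ?_, fun i => ?_⟩
  · simpa [linearSubstEquiv, ← hM] using toMvPolynomial_eq_sum_smul_X M i
  · simpa [linearSubstEquiv] using Matrix.toMvPolynomial_isHomogeneous _ i

lemma map_mem_homogeneousSubmodule_one {R σ τ : Type*} [CommSemiring R]
    {f : MvPolynomial σ R →ₐ[R] MvPolynomial τ R} (hf : ∀ i, (f (X i)).IsHomogeneous 1)
    {p : MvPolynomial σ R} (hp : p ∈ homogeneousSubmodule σ R 1) :
    f p ∈ homogeneousSubmodule τ R 1 := by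
  rw [homogeneousSubmodule_one_eq_span_X] at hp
  refine (Submodule.span_le (p := (homogeneousSubmodule τ R 1).comap f.toLinearMap)).mpr ?_ hp
  rintro _ ⟨i, rfl⟩
  exact hf i

lemma exists_rename_castSucc {R : Type*} [CommSemiring R] {n : ℕ}
    {p : MvPolynomial (Fin (n + 1)) R} (hp : p.IsHomogeneous 1)
    (hlast : coeff (.single (Fin.last n) 1) p = 0) :
    ∃ ℓ : MvPolynomial (Fin n) R, ℓ.IsHomogeneous 1 ∧ rename Fin.castSucc ℓ = p := by
  rw [← mem_homogeneousSubmodule, homogeneousSubmodule_one_eq_span_X,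
    Submodule.mem_span_range_iff_exists_fun] at hp
  obtain ⟨c, rfl⟩ := hp
  have hc : c (Fin.last n) = 0 := by
    simpa [coeff_sum, coeff_X, Finsupp.single_left_inj] using hlast
  refine ⟨∑ i, c i.castSucc • X i, .sum _ _ _ fun i _ => ?_, ?_⟩
  · exact Submodule.smul_mem (homogeneousSubmodule (Fin n) R 1) _ (isHomogeneous_X R i)
  · simp [Fin.sum_univ_castSucc, hc]

end LinearSubstitution

section Reduction

variable (K : Type) [Field K]

/-- The generic symmetric `3 × 3` matrix, whose `2 × 2` minors generate `AMD.veroneseIdeal`. -/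
def genericSymmetric : Matrix (Fin 3) (Fin 3) (PS K 5) :=
  !![X 0, X 1, X 2; X 1, X 3, X 4; X 2, X 4, X 5]

/-- The five conics parametrizing the generic projection of the Veronese surface in normal form:
the projection from the point of `ℙ⁵` on which `x₂ - x₃` and the other coordinates `x₀, x₁, x₄, x₅`
vanish. -/
def projectedConic : Fin 5 → MvPolynomial (Fin 3) K :=
  ![X 0 * X 0, X 0 * X 1, X 0 * X 2 - X 1 * X 1, X 1 * X 2, X 2 * X 2]

variable {K}

lemma veroneseMap_genericSymmetric (i j : Fin 3) :
    veroneseMap K (genericSymmetric K i j) = X i * X j := by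
  fin_cases i <;> fin_cases j <;> simp [veroneseMap, genericSymmetric] <;> ring

lemma genericSymmetric_isHomogeneous (i j : Fin 3) : (genericSymmetric K i j).IsHomogeneous 1 := by
  fin_cases i <;> fin_cases j <;> exact isHomogeneous_X K _

lemma det_genericSymmetric : (genericSymmetric K).det = AMD.veroneseDet K := by
  simp only [Matrix.det_fin_three, genericSymmetric, AMD.veroneseDet, Matrix.of_apply,
    Matrix.cons_val', Matrix.cons_val_zero, Matrix.cons_val_one, Matrix.cons_val_fin_one,
    Matrix.cons_val]
  ring

lemma linearIndependent_projectedConic : LinearIndependent K (projectedConic K) := by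
  rw [Fintype.linearIndependent_iff]
  intro c hc
  have heval (x y z : K) := congrArg (eval ![x, y, z]) hc
  simp only [Fin.sum_univ_five, projectedConic] at heval
  have h₀ := heval 1 0 0
  have h₂ := heval 0 1 0
  have h₄ := heval 0 0 1
  have h₁ := heval 1 1 0
  have h₃ := heval 0 1 1
  simp at h₀ h₁ h₂ h₃ h₄
  intro i
  fin_cases i <;> simp_all

-- Modulo the ideal of the point, `ψ` sends the generic symmetric matrix to its matrix of
-- coefficients at the last variable times that variable.
lemma det_coeff_ne_zero {ψ : PS K 5 ≃ₐ[K] PS K 5} (hψ : AMD.IsGrAut K 5 ψ)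
    (h : ¬ Ideal.map ψ (Ideal.span {AMD.veroneseDet K}) ≤ AMD.pointIdl K 4) :
    ((genericSymmetric K).map fun f => coeff (.single 5 1) (ψ f)).det ≠ 0 := by
  set P := (genericSymmetric K).map fun f => coeff (.single 5 1) (ψ f) with hP
  contrapose! h
  rw [Ideal.map_span, Set.image_singleton, Ideal.span_singleton_le_iff_mem,
    ← Ideal.Quotient.eq_zero_iff_mem]
  set q := Ideal.Quotient.mkₐ K (AMD.pointIdl K 4)
  have hq_lin {f : PS K 5} (hf : f.IsHomogeneous 1) :
      q f = coeff (.single 5 1) f • q (X 5) := by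
    rw [← mem_homogeneousSubmodule, homogeneousSubmodule_one_eq_span_X,
      Submodule.mem_span_range_iff_exists_fun] at hf
    obtain ⟨c, rfl⟩ := hf
    have hX {j : Fin 6} (hj : j ≠ 5) : q (X j) = 0 :=
      Ideal.Quotient.eq_zero_iff_mem.mpr (Ideal.subset_span ⟨j, hj, rfl⟩)
    rw [map_sum, Finset.sum_eq_single 5 (fun j _ hj => by rw [map_smul, hX hj, smul_zero])
      (by simp), map_smul]
    simp [coeff_sum, coeff_X, Finsupp.single_left_inj]
  have hmatrix : (q.comp ψ.toAlgHom).mapMatrix (genericSymmetric K) =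
      q (X 5) • (algebraMap K _).mapMatrix P := by
    ext i j
    simpa [← Algebra.smul_def, hP, mul_comm (q (X 5))] using
      hq_lin (map_mem_homogeneousSubmodule_one (f := ψ.toAlgHom) hψ
        (genericSymmetric_isHomogeneous i j))
  have hdet := congrArg Matrix.det hmatrix
  rw [← AlgHom.map_det, Matrix.det_smul, ← RingHom.map_det, h, map_zero, mul_zero,
    det_genericSymmetric] at hdet
  exact hdet

lemma map_ker_eq_ker_comp_symm {A B : Type*} [CommRing A] [CommRing B] [Algebra K A] [Algebra K B]
    (f : A →ₐ[K] B) (σ : A ≃ₐ[K] A) :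
    (RingHom.ker f).map σ = RingHom.ker (f.comp σ.symm.toAlgHom) :=
  (Ideal.comap_symm σ.toRingEquiv).symm

lemma comap_rename_map_veroneseIdeal (ψ : PS K 5 ≃ₐ[K] PS K 5) :
    Ideal.comap (rename (Fin.castSucc : Fin 5 → Fin 6)) (Ideal.map ψ (AMD.veroneseIdeal K)) =
      RingHom.ker (((veroneseMap K).comp ψ.symm.toAlgHom).comp (rename Fin.castSucc)) := by
  rw [← AlgHom.comap_ker, ← map_ker_eq_ker_comp_symm, ker_veroneseMap]

/-- The linear form on `ℙ⁵` whose restriction to the Veronese surface is the product of the linear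
forms given by rows `i` and `j` of `N`. -/
def productForm (N : Matrix (Fin 3) (Fin 3) K) (i j : Fin 3) : PS K 5 :=
  ∑ k, ∑ l, (N i k * N j l) • genericSymmetric K k l

lemma productForm_isHomogeneous (N : Matrix (Fin 3) (Fin 3) K) (i j : Fin 3) :
    (productForm N i j).IsHomogeneous 1 :=
  Submodule.sum_mem (homogeneousSubmodule _ K 1) fun k _ => Submodule.sum_mem _ fun l _ =>
    Submodule.smul_mem _ _ (genericSymmetric_isHomogeneous k l)

lemma veroneseMap_productForm (N : Matrix (Fin 3) (Fin 3) K) (i j : Fin 3) :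
    veroneseMap K (productForm N i j) = N.toMvPolynomial i * N.toMvPolynomial j := by
  simp only [productForm, map_sum, map_smul, veroneseMap_genericSymmetric,
    toMvPolynomial_eq_sum_smul_X, Finset.sum_mul_sum, smul_mul_smul_comm]

lemma map_productForm (φ : PS K 5 →ₗ[K] K) (N : Matrix (Fin 3) (Fin 3) K) (i j : Fin 3) :
    φ (productForm N i j) = (N * (genericSymmetric K).map φ * N.transpose) i j := by
  simp only [productForm, map_sum, map_smul, smul_eq_mul, Matrix.mul_apply, Matrix.transpose_apply,
    Matrix.map_apply, Finset.sum_mul]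
  rw [Finset.sum_comm]
  exact Finset.sum_congr rfl fun k _ => Finset.sum_congr rfl fun l _ => by ring

/-- The linear forms on `ℙ⁵` that restrict to the conics `projectedConic` in the coordinates given
by the rows of `N`. -/
def projectedConicForm (N : Matrix (Fin 3) (Fin 3) K) : Fin 5 → PS K 5 :=
  ![productForm N 0 0, productForm N 0 1, productForm N 0 2 - productForm N 1 1, productForm N 1 2,
    productForm N 2 2]

lemma projectedConicForm_isHomogeneous (N : Matrix (Fin 3) (Fin 3) K) (k : Fin 5) :
    (projectedConicForm N k).IsHomogeneous 1 := by
  have h := productForm_isHomogeneous N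
  fin_cases k
  exacts [h 0 0, h 0 1, (h 0 2).sub (h 1 1), h 1 2, h 2 2]

lemma veroneseMap_projectedConicForm (N : Matrix (Fin 3) (Fin 3) K) (k : Fin 5) :
    veroneseMap K (projectedConicForm N k) = bind₁ N.toMvPolynomial (projectedConic K k) := by
  fin_cases k <;> simp [projectedConicForm, projectedConic, veroneseMap_productForm]

lemma map_projectedConicForm {φ : PS K 5 →ₗ[K] K} {N : Matrix (Fin 3) (Fin 3) K}
    (hN : N * (genericSymmetric K).map φ * N.transpose = antidiagonalGram K) (k : Fin 5) :
    φ (projectedConicForm N k) = 0 := by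
  fin_cases k <;> simp [projectedConicForm, map_productForm, hN, antidiagonalGram]

theorem exists_grAut_ker_eq [IsAlgClosed K] {I : Ideal (PS K 4)} (hI : AMD.IsGenProjVeronese4 K I) :
    ∃ σ : PS K 4 ≃ₐ[K] PS K 4, AMD.IsGrAut K 4 σ ∧ AMD.IsGrAut K 4 σ.symm ∧
      I = RingHom.ker ((aeval (projectedConic K)).comp σ.symm.toAlgHom) := by
  obtain ⟨ψ, hψ, hdet, rfl⟩ := hI
  let φ : PS K 5 →ₗ[K] K := lcoeff K (.single 5 1) ∘ₗ ψ.toLinearMap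
  obtain ⟨N, hN⟩ := exists_congr_antidiagonalGram (P := (genericSymmetric K).map φ)
    (by ext i j; fin_cases i <;> fin_cases j <;> rfl) (det_coeff_ne_zero hψ hdet)
  have hNdet : IsUnit N.det := by
    have h := congrArg Matrix.det hN
    refine isUnit_iff_ne_zero.mpr fun h0 => ?_
    simp [h0, antidiagonalGram, Matrix.det_fin_three] at h
  let θ := linearSubstEquiv N hNdet
  let π := ((veroneseMap K).comp ψ.symm.toAlgHom).comp (rename (Fin.castSucc : Fin 5 → Fin 6))
  have hform (k) := exists_rename_castSucc
    (map_mem_homogeneousSubmodule_one (f := ψ.toAlgHom) hψ (projectedConicForm_isHomogeneous N k))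
    (map_projectedConicForm hN k)
  choose ℓ hℓ hℓψ using hform
  have hπℓ (k) : π (ℓ k) = θ (projectedConic K k) := by
    change veroneseMap K (ψ.symm (rename _ (ℓ k))) = bind₁ _ _
    rw [hℓψ, ← veroneseMap_projectedConicForm]
    exact congrArg _ (ψ.symm_apply_apply _)
  have hind : LinearIndependent K ℓ := .of_comp π.toLinearMap <| by
    rw [show π.toLinearMap ∘ ℓ = θ.toLinearMap ∘ projectedConic K from funext hπℓ]
    exact linearIndependent_projectedConic.map' _ (LinearMap.ker_eq_bot.mpr θ.injective)
  obtain ⟨σ, hσ, hσsymm⟩ := exists_algEquiv_of_linearIndependent hℓ hind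
  have hπσ : π.comp σ.toAlgHom = θ.toAlgHom.comp (aeval (projectedConic K)) := by
    ext1 k
    simpa [hσ] using hπℓ k
  refine ⟨σ, fun i => hσ i ▸ hℓ i, hσsymm, ?_⟩
  ext f
  have hf : π f = θ (aeval (projectedConic K) (σ.symm f)) := by
    simpa using DFunLike.congr_fun hπσ (σ.symm f)
  rw [comap_rename_map_veroneseIdeal, RingHom.mem_ker, RingHom.mem_ker]
  exact (congrArg (· = 0) hf).to_iff.trans (map_eq_zero_iff θ θ.injective)

end Reduction

section GradedKernel

variable {K : Type} [Field K] {r : ℕ}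

lemma homogeneousSubmodule_eq_restrictSupport {R ι : Type*} [CommSemiring R] [Fintype ι]
    [DecidableEq ι] (n : ℕ) : homogeneousSubmodule ι R n =
      restrictSupport R ((Finset.univ : Finset ι).finsuppAntidiag n : Set (ι →₀ ℕ)) := by
  rw [homogeneousSubmodule_eq_finsupp_supported]
  change restrictSupport R _ = _
  congr 1
  ext d
  simp [Finsupp.degree_eq_sum]

instance finite_homogeneousSubmodule {R ι : Type*} [CommSemiring R] [Finite ι] (n : ℕ) :
    Module.Finite R (homogeneousSubmodule ι R n) := by
  classical
  have := Fintype.ofFinite ι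
  rw [homogeneousSubmodule_eq_restrictSupport]
  exact .of_basis (basisRestrictSupport R _)

lemma finrank_homogeneousSubmodule {R ι : Type*} [CommSemiring R] [StrongRankCondition R]
    [Fintype ι] (n : ℕ) :
    Module.finrank R (homogeneousSubmodule ι R n) = (Fintype.card ι).multichoose n := by
  classical
  rw [homogeneousSubmodule_eq_restrictSupport,
    Module.finrank_eq_nat_card_basis (basisRestrictSupport R _), SetLike.coe_sort_coe,
    Nat.card_eq_fintype_card, Fintype.card_coe, Finset.card_finsuppAntidiag_nat_eq_multichoose,
    Finset.card_univ]

lemma map_homogeneousSubmodule_eq_pow {R B σ : Type*} [CommSemiring R] [CommSemiring B]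
    [Algebra R B] (π : MvPolynomial σ R →ₐ[R] B) (n : ℕ) :
    (homogeneousSubmodule σ R n).map π.toLinearMap =
      (homogeneousSubmodule σ R 1).map π.toLinearMap ^ n := by
  rw [← Submodule.map_pow, homogeneousSubmodule_one_pow]

lemma homogeneousComponent_mul_map {R σ τ : Type*} [CommSemiring R]
    {π : MvPolynomial σ R →ₐ[R] MvPolynomial τ R} {k : ℕ} (hk : k ≠ 0)
    (hπ : ∀ i, (π (X i)).IsHomogeneous k) (n : ℕ) (p : MvPolynomial σ R) :
    homogeneousComponent (k * n) (π p) = π (homogeneousComponent n p) := by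
  have hmap {m : ℕ} {q : MvPolynomial σ R} (hq : q.IsHomogeneous m) :
      (π q).IsHomogeneous (k * m) := by
    rw [aeval_unique π]
    exact hq.aeval _ hπ
  have hcomp (m : ℕ) : homogeneousComponent (k * n) (π (homogeneousComponent m p)) =
      if k * n = k * m then π (homogeneousComponent m p) else 0 :=
    homogeneousComponent_of_mem (hmap (homogeneousComponent_isHomogeneous m p))
  conv_lhs => rw [← sum_homogeneousComponent p]
  rw [map_sum, map_sum, Finset.sum_eq_single n]
  · rw [hcomp, if_pos rfl]
  · intro m _ hm
    rw [hcomp, if_neg fun h => hm (Nat.eq_of_mul_eq_mul_left (Nat.pos_of_ne_zero hk) h).symm]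
  · intro hn
    rw [homogeneousComponent_eq_zero n p (by simpa using hn), map_zero, map_zero]

lemma isHomIdeal_ker {τ : Type*} {π : PS K r →ₐ[K] MvPolynomial τ K} {k : ℕ} (hk : k ≠ 0)
    (hπ : ∀ i, (π (X i)).IsHomogeneous k) : AMD.IsHomIdeal K r (RingHom.ker π) := by
  intro p hp n
  rw [RingHom.mem_ker] at hp ⊢
  rw [← homogeneousComponent_mul_map hk hπ, hp, map_zero]

lemma finrank_quotComponent_ker {B : Type*} [CommRing B] [Algebra K B] (π : PS K r →ₐ[K] B)
    (n : ℕ) :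
    Module.finrank K (AMD.quotComponent K r (RingHom.ker π) n) =
      Module.finrank K ((homogeneousSubmodule (Fin (r + 1)) K n).map π.toLinearMap) := by
  have hmap : (AMD.quotComponent K r (RingHom.ker π) n).map
      (Ideal.kerLiftAlg π).toLinearMap = (homogeneousSubmodule _ K n).map π.toLinearMap := by
    rw [AMD.quotComponent, ← Submodule.map_comp]
    rfl
  rw [← hmap]
  exact (Submodule.equivMapOfInjective (Ideal.kerLiftAlg π).toLinearMap
    (Ideal.kerLiftAlg_injective π) _).finrank_eq

lemma eq_zero_of_map_eq_zero_of_finrank_map {F ι B : Type*} [Field F] [Finite ι] [AddCommGroup B]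
    [Module F B] {φ : MvPolynomial ι F →ₗ[F] B} {n : ℕ}
    (hrank : Module.finrank F ((homogeneousSubmodule ι F n).map φ) =
      Module.finrank F (homogeneousSubmodule ι F n))
    {p : MvPolynomial ι F} (hp : φ p = 0) (hpn : p.IsHomogeneous n) : p = 0 := by
  have hker : LinearMap.ker (φ.domRestrict (homogeneousSubmodule ι F n)) = ⊥ := by
    have h := LinearMap.finrank_range_add_finrank_ker (φ.domRestrict (homogeneousSubmodule ι F n))
    rw [LinearMap.range_domRestrict, hrank, Nat.add_eq_left] at h
    exact Submodule.finrank_eq_zero.mp h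
  exact congrArg Subtype.val
    ((Submodule.eq_bot_iff _).mp hker ⟨p, hpn⟩ (LinearMap.mem_ker.mpr hp))

lemma ringKrullDim_eq_of_isIntegral_of_injective {R B : Type*} [CommRing R] [CommRing B]
    {f : R →+* B} (hf : f.IsIntegral) (hinj : Function.Injective f) :
    ringKrullDim R = ringKrullDim B := by
  algebraize [f]
  refine le_antisymm (iSup_le fun l => ?_) (Order.krullDim_le_of_strictMono (PrimeSpectrum.comap f)
    fun p q hpq => Ideal.IsIntegral.comap_lt_comap (R := R) (I := p.asIdeal) (J := q.asIdeal) hpq)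
  obtain ⟨P, hP⟩ := hf.comap_surjective hinj l.head
  have : P.asIdeal.LiesOver l.head.asIdeal := ⟨congrArg PrimeSpectrum.asIdeal hP.symm⟩
  obtain ⟨L, hL, -⟩ := Ideal.exists_ltSeries_of_hasGoingUp l P.asIdeal
  exact hL ▸ Order.LTSeries.length_le_krullDim L

lemma dimEq_ker_of_isIntegral {n : ℕ} {π : PS K r →ₐ[K] MvPolynomial (Fin (n + 1)) K}
    (hπ : π.toRingHom.IsIntegral) : AMD.DimEq K r (RingHom.ker π) n := by
  rw [AMD.DimEq, ringKrullDim_eq_of_isIntegral_of_injective (f := (Ideal.kerLiftAlg π).toRingHom)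
    (RingHom.IsIntegral.tower_top (Ideal.Quotient.mk _) _ hπ) (Ideal.kerLiftAlg_injective π),
    MvPolynomial.ringKrullDim_of_isNoetherianRing, ringKrullDim_eq_zero_of_field]
  simp

lemma exists_kerLift_eq_mul_of_mem_maxIdl {B : Type*} [CommRing B] [Algebra K B]
    {π : PS K r →ₐ[K] B} {w : B} (hw : ∀ i, π (X i) * w ∈ π.range) {a : PS K r ⧸ RingHom.ker π}
    (ha : a ∈ AMD.maxIdl K r (RingHom.ker π)) :
    ∃ b, Ideal.kerLiftAlg π b = Ideal.kerLiftAlg π a * w := by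
  rw [AMD.maxIdl, Ideal.map_span] at ha
  induction ha using Submodule.span_induction with
  | mem _ h =>
    obtain ⟨_, ⟨i, rfl⟩, rfl⟩ := h
    obtain ⟨f, hf⟩ := hw i
    exact ⟨Ideal.Quotient.mk _ f, hf⟩
  | zero => exact ⟨0, by rw [map_zero, zero_mul]⟩
  | add x y _ _ hx hy =>
    obtain ⟨x', hx⟩ := hx
    obtain ⟨y', hy⟩ := hy
    exact ⟨x' + y', by rw [map_add, map_add, add_mul, hx, hy]⟩
  | smul c x _ hx =>
    obtain ⟨x', hx⟩ := hx
    exact ⟨c * x', by rw [smul_eq_mul, map_mul, map_mul, mul_assoc, hx]⟩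

-- If `a, b` began a regular sequence, then `b * (a * w) = a * (b * w)` with `a * w, b * w ∈ A_X`
-- would give `a * w ∈ a A_X`, hence `w ∈ A_X`.
lemma depthEq_one_ker {B : Type*} [CommRing B] [IsDomain B] [Algebra K B] {π : PS K r →ₐ[K] B}
    {i₀ : Fin (r + 1)} (hi₀ : π (X i₀) ≠ 0) {w : B} (hw : w ∉ π.range)
    (hXw : ∀ i, π (X i) * w ∈ π.range) : AMD.DepthEq K r (RingHom.ker π) 1 := by
  have hinj := Ideal.kerLiftAlg_injective π
  have := RingHom.ker_isPrime π
  constructor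
  · refine ⟨[Ideal.Quotient.mk _ (X i₀)], rfl, ?_, ?_⟩
    · intro x hx
      rw [List.mem_singleton.mp hx]
      exact Ideal.mem_map_of_mem _ (Ideal.subset_span ⟨i₀, rfl⟩)
    · rintro ⟨i, hi⟩ y hy
      obtain rfl : i = 0 := by simpa using hi
      have hX : Ideal.Quotient.mk (RingHom.ker π) (X i₀) ≠ 0 := by
        rwa [Ne, Ideal.Quotient.eq_zero_iff_mem]
      simpa [hX] using hy
  · rintro (_ | ⟨a, _ | ⟨b, l⟩⟩) hmem hreg
    · simp
    · simp
    exfalso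
    obtain ⟨a', ha'⟩ := exists_kerLift_eq_mul_of_mem_maxIdl hXw (hmem a (by simp))
    obtain ⟨b', hb'⟩ := exists_kerLift_eq_mul_of_mem_maxIdl hXw (hmem b (by simp))
    have ha : a ≠ 0 := by
      rintro rfl
      simpa using hreg ⟨0, by simp⟩ 1
    have hcomm : b * a' = a * b' := hinj (by rw [map_mul, map_mul, ha', hb']; ring)
    have hba' : b * a' ∈ Ideal.span {a} :=
      hcomm ▸ Ideal.mul_mem_right _ _ (Ideal.mem_span_singleton_self a)
    have ha'a : a' ∈ Ideal.span {a} := by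
      simpa using hreg ⟨1, by simp⟩ a' (by simpa using hba')
    obtain ⟨c, rfl⟩ := Ideal.mem_span_singleton.mp ha'a
    obtain ⟨f, rfl⟩ := Ideal.Quotient.mk_surjective c
    rw [map_mul] at ha'
    exact hw ⟨f, mul_left_cancel₀ ((map_ne_zero_iff _ hinj).mpr ha) ha'⟩

end GradedKernel

section ConicSystem

variable (K : Type) [Field K]

/-- The linear system of conics spanned by `projectedConic K`; its elements are the restrictions of
the linear forms of `ℙ⁴` to the projected Veronese surface. -/
def conicSystem : Submodule K (MvPolynomial (Fin 3) K) :=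
  Submodule.span K (Set.range (projectedConic K))

/-- The conic that is missing from `conicSystem K`. -/
def missingConic : MvPolynomial (Fin 3) K := X 0 * X 2

/-- Five quadrics in `y`; multiplication by `missingConic` sends the `i`-th conic of
`projectedConic` to the `i`-th of these quadrics in the conics. -/
def conicQuadric {R : Type*} [CommRing R] (y : Fin 5 → R) : Fin 5 → R :=
  ![y 0 * y 2 + y 1 * y 1, y 0 * y 3, y 0 * y 4 - y 1 * y 3, y 1 * y 4, y 2 * y 4 + y 3 * y 3]

variable {K}

lemma projectedConic_mul_missingConic (i : Fin 5) :
    projectedConic K i * missingConic K = conicQuadric (projectedConic K) i := by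
  fin_cases i <;> simp [projectedConic, missingConic, conicQuadric] <;> ring

lemma projectedConic_mem_conicSystem (i : Fin 5) : projectedConic K i ∈ conicSystem K :=
  Submodule.subset_span ⟨i, rfl⟩

lemma conicSystem_le : conicSystem K ≤ homogeneousSubmodule (Fin 3) K 2 := by
  have h (i j : Fin 3) := (isHomogeneous_X K i).mul (isHomogeneous_X K j)
  rw [conicSystem, Submodule.span_le]
  rintro _ ⟨i, rfl⟩
  fin_cases i
  exacts [h 0 0, h 0 1, (h 0 2).sub (h 1 1), h 1 2, h 2 2]

lemma finrank_conicSystem : Module.finrank K (conicSystem K) = 5 :=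
  (finrank_span_eq_card linearIndependent_projectedConic).trans (Fintype.card_fin 5)

lemma le_conicSystem_sup :
    homogeneousSubmodule (Fin 3) K 2 ≤ conicSystem K ⊔ Submodule.span K {missingConic K} := by
  set V := conicSystem K ⊔ Submodule.span K {missingConic K}
  have hw : X 0 * X 2 ∈ V := Submodule.mem_sup_right (Submodule.mem_span_singleton_self _)
  have hW (i) : projectedConic K i ∈ V := Submodule.mem_sup_left (projectedConic_mem_conicSystem i)
  have h11 : X 1 * X 1 ∈ V := by simpa [projectedConic] using V.sub_mem hw (hW 2)
  rw [← homogeneousSubmodule_one_pow, pow_two, homogeneousSubmodule_one_eq_span_X,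
    Submodule.span_mul_span, Submodule.span_le]
  rintro _ ⟨_, ⟨i, rfl⟩, _, ⟨j, rfl⟩, rfl⟩
  wlog hij : i ≤ j generalizing i j
  · simpa only [mul_comm] using this j i (le_of_not_ge hij)
  fin_cases i <;> fin_cases j <;> first | exact absurd hij (by decide) | skip
  exacts [hW 0, hW 1, hw, h11, hW 3, hW 4]

lemma missingConic_notMem : missingConic K ∉ conicSystem K := by
  intro hw
  have hle := le_conicSystem_sup (K := K)
  rw [sup_eq_left.mpr ((Submodule.span_singleton_le_iff_mem _ _).mpr hw)] at hle
  have h := finrank_homogeneousSubmodule (R := K) (ι := Fin 3) 2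
  rw [hle.antisymm conicSystem_le, finrank_conicSystem] at h
  norm_num [Nat.multichoose_eq, Nat.choose] at h

lemma conicSystem_mul_missingConic_le :
    conicSystem K * Submodule.span K {missingConic K} ≤ conicSystem K ^ 2 := by
  have h (i j : Fin 5) : projectedConic K i * projectedConic K j ∈ conicSystem K ^ 2 :=
    pow_two (conicSystem K) ▸ Submodule.mul_mem_mul (projectedConic_mem_conicSystem i)
      (projectedConic_mem_conicSystem j)
  rw [conicSystem, Submodule.span_mul_span, Submodule.span_le]
  rintro _ ⟨_, ⟨i, rfl⟩, _, rfl, rfl⟩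
  simp only [SetLike.mem_coe, projectedConic_mul_missingConic]
  fin_cases i
  exacts [add_mem (h 0 2) (h 1 1), h 0 3, sub_mem (h 0 4) (h 1 3), h 1 4, add_mem (h 2 4) (h 3 3)]

lemma missingConic_mul_missingConic_le :
    Submodule.span K {missingConic K} * Submodule.span K {missingConic K} ≤ conicSystem K ^ 2 := by
  rw [Submodule.span_mul_span, Submodule.span_le, Set.singleton_mul_singleton,
    Set.singleton_subset_iff, pow_two]
  have hw : missingConic K * missingConic K = projectedConic K 0 * projectedConic K 4 := by
    simp only [missingConic, projectedConic, Matrix.cons_val]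
    ring
  exact hw ▸ Submodule.mul_mem_mul (projectedConic_mem_conicSystem 0)
    (projectedConic_mem_conicSystem 4)

lemma conicSystem_sq : conicSystem K ^ 2 = homogeneousSubmodule (Fin 3) K 2 ^ 2 := by
  refine le_antisymm (pow_le_pow_left₀ bot_le conicSystem_le 2) ?_
  refine (pow_le_pow_left₀ bot_le le_conicSystem_sup 2).trans ?_
  rw [pow_two, Submodule.sup_mul, Submodule.mul_sup, Submodule.mul_sup]
  refine sup_le (sup_le (pow_two _).ge conicSystem_mul_missingConic_le)
    (sup_le ?_ missingConic_mul_missingConic_le)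
  exact (mul_comm _ _).trans_le conicSystem_mul_missingConic_le

lemma homogeneousSubmodule_two_mul_conicSystem :
    homogeneousSubmodule (Fin 3) K 2 * conicSystem K = homogeneousSubmodule (Fin 3) K 2 ^ 2 := by
  refine le_antisymm ((mul_le_mul_right conicSystem_le _).trans (pow_two _).ge) ?_
  rw [← conicSystem_sq, pow_two]
  exact mul_le_mul_left conicSystem_le _

lemma conicSystem_pow {n : ℕ} (hn : n ≠ 1) :
    conicSystem K ^ n = homogeneousSubmodule (Fin 3) K (2 * n) := by
  have h (m : ℕ) : conicSystem K ^ (m + 2) = homogeneousSubmodule (Fin 3) K 2 ^ (m + 2) := by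
    induction m with
    | zero => exact conicSystem_sq
    | succ m ih =>
      rw [pow_succ, ih, pow_succ, mul_assoc, homogeneousSubmodule_two_mul_conicSystem, ← pow_add]
  rw [← homogeneousSubmodule_one_pow _ (2 * n), pow_mul, homogeneousSubmodule_one_pow]
  obtain _ | _ | m := n
  exacts [rfl, absurd rfl hn, h m]

end ConicSystem

section ConicParametrization

variable {K : Type} [Field K]

/-- `π` pulls the linear forms of `ℙ⁴` back to the linear system `conicSystem K`; such a `π`
parametrizes a generic projection of the Veronese surface. -/
def IsConicParametrization (π : PS K 4 →ₐ[K] MvPolynomial (Fin 3) K) : Prop :=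
  (homogeneousSubmodule (Fin 5) K 1).map π.toLinearMap = conicSystem K

lemma isConicParametrization_aeval_comp {σ : PS K 4 ≃ₐ[K] PS K 4} (hσ : AMD.IsGrAut K 4 σ)
    (hσ' : AMD.IsGrAut K 4 σ.symm) :
    IsConicParametrization ((aeval (projectedConic K)).comp σ.toAlgHom) := by
  have h : (homogeneousSubmodule (Fin 5) K 1).map σ.toLinearMap =
      homogeneousSubmodule (Fin 5) K 1 := by
    refine le_antisymm (Submodule.map_le_iff_le_comap.mpr fun p hp => ?_) fun p hp => ?_
    · exact map_mem_homogeneousSubmodule_one (f := σ.toAlgHom) hσ hp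
    · exact ⟨σ.symm p, map_mem_homogeneousSubmodule_one (f := σ.symm.toAlgHom) hσ' hp,
        σ.apply_symm_apply p⟩
  change (homogeneousSubmodule (Fin 5) K 1).map
    ((aeval (projectedConic K)).toLinearMap ∘ₗ σ.toLinearMap) = _
  rw [Submodule.map_comp, h, homogeneousSubmodule_one_eq_span_X, Submodule.map_span,
    ← Set.range_comp, conicSystem]
  congr 2
  exact funext fun i => aeval_X _ i

lemma multichoose_three_two_mul (n : ℕ) :
    Nat.multichoose 3 (2 * n) = (n + 2).choose 2 + 3 * (n + 1).choose 2 := by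
  have h : Nat.multichoose 3 (2 * n) = (2 * n + 2).choose 2 := by
    rw [Nat.multichoose_eq, ← Nat.choose_symm_add]
    congr 1
    omega
  rw [h, ← Nat.cast_inj (R := ℚ)]
  push_cast [Nat.cast_choose_two]
  ring

namespace IsConicParametrization

variable {π : PS K 4 →ₐ[K] MvPolynomial (Fin 3) K}

lemma mem_conicSystem (hπ : IsConicParametrization π) (i : Fin 5) : π (X i) ∈ conicSystem K :=
  hπ ▸ Submodule.mem_map_of_mem (isHomogeneous_X K i)

lemma isHomogeneous (hπ : IsConicParametrization π) (i : Fin 5) : (π (X i)).IsHomogeneous 2 :=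
  conicSystem_le (hπ.mem_conicSystem i)

lemma map_homogeneousSubmodule (hπ : IsConicParametrization π) (n : ℕ) :
    (homogeneousSubmodule (Fin 5) K n).map π.toLinearMap = conicSystem K ^ n := by
  rw [map_homogeneousSubmodule_eq_pow, hπ]

lemma conicSystem_pow_le_range (hπ : IsConicParametrization π) (n : ℕ) :
    conicSystem K ^ n ≤ LinearMap.range π.toLinearMap := by
  rw [← hπ.map_homogeneousSubmodule]
  exact LinearMap.map_le_range

lemma finrank_map (hπ : IsConicParametrization π) (n : ℕ) :
    Module.finrank K ((homogeneousSubmodule (Fin 5) K n).map π.toLinearMap) =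
      if n = 1 then 5 else Nat.multichoose 3 (2 * n) := by
  rw [hπ.map_homogeneousSubmodule]
  split_ifs with hn
  · rw [hn, pow_one, finrank_conicSystem]
  · rw [conicSystem_pow hn, finrank_homogeneousSubmodule, Fintype.card_fin]

lemma eq_zero_of_mem_ker (hπ : IsConicParametrization π) {p : PS K 4} {n : ℕ} (hn : n ≤ 2)
    (hp : p ∈ RingHom.ker π) (hpn : p.IsHomogeneous n) : p = 0 := by
  refine eq_zero_of_map_eq_zero_of_finrank_map (φ := π.toLinearMap) ?_ hp hpn
  rw [hπ.finrank_map, finrank_homogeneousSubmodule, Fintype.card_fin]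
  interval_cases n <;> norm_num [Nat.multichoose_eq, Nat.choose]

lemma isIntegral (hπ : IsConicParametrization π) : π.toRingHom.IsIntegral := by
  algebraize [π.toRingHom]
  have hW (i) : IsIntegral (PS K 4) (projectedConic K i) := by
    obtain ⟨f, hf⟩ := hπ.conicSystem_pow_le_range 1
      (by simpa using projectedConic_mem_conicSystem i)
    exact hf ▸ isIntegral_algebraMap (x := f)
  have hsq {x : MvPolynomial (Fin 3) K} (hx : IsIntegral (PS K 4) (x * x)) :
      IsIntegral (PS K 4) x := .of_pow two_pos (pow_two x ▸ hx)
  have h0 : IsIntegral (PS K 4) (X 0 : MvPolynomial (Fin 3) K) := hsq (hW 0)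
  have h2 : IsIntegral (PS K 4) (X 2 : MvPolynomial (Fin 3) K) := hsq (hW 4)
  have h1 : IsIntegral (PS K 4) (X 1 : MvPolynomial (Fin 3) K) := by
    refine hsq ?_
    simpa [projectedConic] using (h0.mul h2).sub (hW 2)
  intro p
  change IsIntegral (PS K 4) p
  induction p using MvPolynomial.induction_on with
  | C a => exact π.commutes a ▸ isIntegral_algebraMap (x := C a)
  | add p q hp hq => exact hp.add hq
  | mul_X p i hp =>
    refine hp.mul ?_
    fin_cases i
    exacts [h0, h1, h2]

lemma hilbSeries_ker (hπ : IsConicParametrization π) :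
    AMD.hilbSeries K 4 (RingHom.ker π) =
      (1 + PowerSeries.C 3 * PowerSeries.X) * PowerSeries.mk (fun n => (Nat.choose (2 + n) 2 : ℤ)) -
        PowerSeries.X := by
  ext n
  rw [AMD.hilbSeries, PowerSeries.coeff_mk, finrank_quotComponent_ker, hπ.finrank_map, add_mul,
    one_mul, mul_assoc, map_sub, map_add, PowerSeries.coeff_C_mul, PowerSeries.coeff_mk,
    PowerSeries.coeff_X, multichoose_three_two_mul]
  obtain _ | n := n
  · simp
  rw [PowerSeries.coeff_succ_X_mul, PowerSeries.coeff_mk, show n + 1 + 2 = 2 + (n + 1) by ring,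
    show n + 1 + 1 = 2 + n by ring]
  obtain rfl | hn := eq_or_ne n 0
  · norm_num [Nat.choose]
  · simp [hn]

lemma degreeEq_ker (hπ : IsConicParametrization π) : AMD.DegreeEq K 4 (RingHom.ker π) 2 4 := by
  refine ⟨1 + .C 3 * .X - .X * (1 - .X) ^ 3, ?_, by simp⟩
  have hinv := PowerSeries.mk_add_choose_mul_one_sub_pow_eq_one ℤ 2
  have hcoe (h : Polynomial ℤ) : PowerSeries.mk (fun n => h.coeff n) = (h : PowerSeries ℤ) :=
    PowerSeries.ext fun n => by simp
  rw [hπ.hilbSeries_ker, hcoe, sub_mul, mul_assoc, hinv]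
  simp only [Polynomial.coe_sub, Polynomial.coe_add, Polynomial.coe_mul, Polynomial.coe_pow,
    Polynomial.coe_one, Polynomial.coe_C, Polynomial.coe_X, mul_one]

lemma depthEq_ker (hπ : IsConicParametrization π) : AMD.DepthEq K 4 (RingHom.ker π) 1 := by
  have hX : π (X 0) ≠ 0 := fun h =>
    X_ne_zero (R := K) 0 (hπ.eq_zero_of_mem_ker one_le_two h (isHomogeneous_X K 0))
  refine depthEq_one_ker hX (w := missingConic K) ?_ fun i => ?_
  · rintro ⟨f, hf : π f = missingConic K⟩
    have hw : (missingConic K).IsHomogeneous (2 * 1) :=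
      (isHomogeneous_X K 0).mul (isHomogeneous_X K 2)
    refine missingConic_notMem (K := K) (hπ ▸ ⟨_, homogeneousComponent_isHomogeneous 1 f, ?_⟩)
    exact (homogeneousComponent_mul_map two_ne_zero hπ.isHomogeneous 1 f).symm.trans
      ((congrArg _ hf).trans (homogeneousComponent_eq_self hw))
  · exact hπ.conicSystem_pow_le_range 2 (conicSystem_mul_missingConic_le
      (Submodule.mul_mem_mul (hπ.mem_conicSystem i) (Submodule.mem_span_singleton_self _)))

end IsConicParametrization

end ConicParametrization

section Koszul

variable {R : Type*} [CommRing R]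

/-- The index set of the standard basis of `Λᵏ Rⁿ`: the `k`-element subsets of `{0, …, n - 1}`,
split into those that contain `0` (left) and those that do not (right). -/
def KoszulIndex : ℕ → ℕ → Type
  | 0, 0 => Unit
  | 0, _ + 1 => Empty
  | n + 1, 0 => KoszulIndex n 0
  | n + 1, k + 1 => KoszulIndex n k ⊕ KoszulIndex n (k + 1)

namespace KoszulIndex

instance instDecidableEq : ∀ n k, DecidableEq (KoszulIndex n k)
  | 0, 0 => inferInstanceAs (DecidableEq Unit)
  | 0, _ + 1 => inferInstanceAs (DecidableEq Empty)
  | n + 1, 0 => instDecidableEq n 0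
  | n + 1, k + 1 =>
    have := instDecidableEq n k
    have := instDecidableEq n (k + 1)
    inferInstanceAs (DecidableEq (_ ⊕ _))

instance instFintype : ∀ n k, Fintype (KoszulIndex n k)
  | 0, 0 => inferInstanceAs (Fintype Unit)
  | 0, _ + 1 => inferInstanceAs (Fintype Empty)
  | n + 1, 0 => instFintype n 0
  | n + 1, k + 1 =>
    have := instFintype n k
    have := instFintype n (k + 1)
    inferInstanceAs (Fintype (_ ⊕ _))

instance instUnique : ∀ n, Unique (KoszulIndex n 0)
  | 0 => inferInstanceAs (Unique Unit)
  | n + 1 => instUnique n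

/-- The one-element subset `{i}`. -/
def point : ∀ {n}, Fin n → KoszulIndex n 1
  | _ + 1, i => Fin.cases (Sum.inl default) (fun j => Sum.inr (point j)) i

lemma point_injective : ∀ {n}, Function.Injective (point (n := n))
  | 0 => Function.injective_of_subsingleton _
  | _ + 1 => Fin.cases (Fin.cases (fun _ => rfl) fun _ h => (Sum.inl_ne_inr h).elim) fun _ =>
      Fin.cases (fun h => (Sum.inr_ne_inl h).elim) fun _ h =>
        congrArg Fin.succ (point_injective (Sum.inr_injective h))

/-- The vector in `Λᵏ⁺¹ Rⁿ⁺¹ = Λᵏ Rⁿ ⊕ Λᵏ⁺¹ Rⁿ` with components `b` and `a`. -/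
def glue {α : Type*} {n k : ℕ} (b : KoszulIndex n k → α) (a : KoszulIndex n (k + 1) → α) :
    KoszulIndex (n + 1) (k + 1) → α :=
  Sum.elim b a

end KoszulIndex

open KoszulIndex

/-- The differential `Λᵏ⁺¹ Rⁿ → Λᵏ Rⁿ` of the Koszul complex of `y`, as an iterated mapping cone:
`Λᵏ⁺¹ Rⁿ⁺¹ = Λᵏ Rⁿ ⊕ Λᵏ⁺¹ Rⁿ`, and `(b, a)` is sent to `(-∂b, ∂a + y₀b)`. -/
def koszulDiff : ∀ {n : ℕ} (_ : Fin n → R) (k : ℕ),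
    (KoszulIndex n (k + 1) → R) →ₗ[R] (KoszulIndex n k → R)
  | 0, _, _ => 0
  | n + 1, y, 0 =>
      koszulDiff (Fin.tail y) 0 ∘ₗ LinearMap.funLeft R R (Sum.inr : _ → KoszulIndex n 0 ⊕ _) +
        y 0 • LinearMap.funLeft R R (Sum.inl : _ → _ ⊕ KoszulIndex n 1)
  | n + 1, y, k + 1 => LinearMap.pi fun s : KoszulIndex n k ⊕ KoszulIndex n (k + 1) =>
      s.elim
        (fun i => -LinearMap.proj i ∘ₗ koszulDiff (Fin.tail y) k ∘ₗ LinearMap.funLeft R R Sum.inl)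
        fun i => LinearMap.proj i ∘ₗ
          (koszulDiff (Fin.tail y) (k + 1) ∘ₗ LinearMap.funLeft R R Sum.inr +
            y 0 • LinearMap.funLeft R R Sum.inl)

variable {n : ℕ}

lemma koszulDiff_succ_zero (y : Fin (n + 1) → R) (b : KoszulIndex n 0 → R)
    (a : KoszulIndex n 1 → R) :
    koszulDiff y 0 (glue b a) = koszulDiff (Fin.tail y) 0 a + y 0 • b := rfl

lemma koszulDiff_succ_succ (y : Fin (n + 1) → R) (k : ℕ) (b : KoszulIndex n (k + 1) → R)
    (a : KoszulIndex n (k + 2) → R) :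
    koszulDiff y (k + 1) (glue b a) =
      glue (-koszulDiff (Fin.tail y) k b) (koszulDiff (Fin.tail y) (k + 1) a + y 0 • b) :=
  funext (Sum.rec (fun _ => rfl) fun _ => rfl)

lemma exists_eq_glue {α : Type*} {k : ℕ} (f : KoszulIndex (n + 1) (k + 1) → α) :
    ∃ (b : KoszulIndex n k → α) (a : KoszulIndex n (k + 1) → α), f = glue b a :=
  ⟨f ∘ Sum.inl, f ∘ Sum.inr, (Sum.elim_comp_inl_inr f).symm⟩

lemma glue_eq_zero {k : ℕ} {b : KoszulIndex n k → R} {a : KoszulIndex n (k + 1) → R} :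
    glue b a = 0 ↔ b = 0 ∧ a = 0 :=
  ⟨fun h => ⟨funext fun i => congrFun h (Sum.inl i), funext fun i => congrFun h (Sum.inr i)⟩,
    fun ⟨hb, ha⟩ => hb ▸ ha ▸ Sum.elim_zero_zero⟩

lemma koszulDiff_koszulDiff : ∀ {n : ℕ} (y : Fin n → R) (k : ℕ) (f : KoszulIndex n (k + 2) → R),
    koszulDiff y k (koszulDiff y (k + 1) f) = 0
  | 0, _, _, _ => rfl
  | n + 1, y, k, f => by
    obtain ⟨b, a, rfl⟩ := exists_eq_glue f
    rw [koszulDiff_succ_succ]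
    have ha := koszulDiff_koszulDiff (Fin.tail y) k a
    obtain _ | k := k
    · rw [koszulDiff_succ_zero, map_add, ha, map_smul, smul_neg, zero_add]
      exact add_neg_cancel (y 0 • koszulDiff (Fin.tail y) 0 b)
    · rw [koszulDiff_succ_succ, map_neg, koszulDiff_koszulDiff, map_add, ha, map_smul, smul_neg,
        zero_add, add_neg_cancel, neg_zero, neg_zero]
      exact Sum.elim_zero_zero

lemma koszulDiff_zero_apply : ∀ {n : ℕ} (y : Fin n → R) (a : KoszulIndex n 1 → R),
    koszulDiff y 0 a = fun _ => ∑ i, y i * a (point i)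
  | 0, _, _ => rfl
  | n + 1, y, f => by
    obtain ⟨b, a, rfl⟩ := exists_eq_glue f
    rw [koszulDiff_succ_zero, koszulDiff_zero_apply]
    ext s
    rw [Fin.sum_univ_succ, Pi.add_apply, Pi.smul_apply, Subsingleton.elim s default, add_comm]
    rfl

lemma mem_range_koszulDiff_zero {y : Fin n → R} {b : KoszulIndex n 0 → R}
    (hb : b default ∈ Ideal.span (Set.range y)) : b ∈ LinearMap.range (koszulDiff y 0) := by
  obtain ⟨c, hc⟩ := Ideal.mem_span_range_iff_exists_fun.mp hb
  refine ⟨Function.extend point c 0, ?_⟩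
  rw [koszulDiff_zero_apply]
  ext s
  simp only [point_injective.extend_apply, Subsingleton.elim s default, ← hc, mul_comm]

/-- `yₙ₋₁, …, y₀` is a weakly regular sequence. -/
def IsReverseRegular (y : Fin n → R) : Prop :=
  ∀ i c, y i * c ∈ Ideal.span (y '' Set.Ioi i) → c ∈ Ideal.span (y '' Set.Ioi i)

lemma IsReverseRegular.tail {y : Fin (n + 1) → R} (hy : IsReverseRegular y) :
    IsReverseRegular (Fin.tail y) := by
  intro i
  have h : Fin.tail y '' Set.Ioi i = y '' Set.Ioi i.succ := by
    rw [← Fin.image_succ_Ioi, Set.image_image]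
    rfl
  rw [h]
  exact hy i.succ

lemma isReverseRegular_X : IsReverseRegular (X : Fin n → MvPolynomial (Fin n) R) := by
  intro i c hc
  rw [mem_ideal_span_X_image] at hc ⊢
  intro m hm
  obtain ⟨j, hij, hj⟩ := hc (m + Finsupp.single i 1)
    (by rwa [mem_support_iff, mul_comm, coeff_mul_X, ← mem_support_iff])
  refine ⟨j, hij, ?_⟩
  rwa [Finsupp.add_apply, Finsupp.single_eq_of_ne hij.ne', add_zero] at hj

lemma glue_mem_range_koszulDiff {y : Fin (n + 1) → R} {k : ℕ}
    (hy : LinearMap.ker (koszulDiff (Fin.tail y) k) ≤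
      LinearMap.range (koszulDiff (Fin.tail y) (k + 1)))
    {b : KoszulIndex n k → R} {a : KoszulIndex n (k + 1) → R}
    (hb : b ∈ LinearMap.range (koszulDiff (Fin.tail y) k))
    (ha : koszulDiff (Fin.tail y) k a + y 0 • b = 0) :
    glue b a ∈ LinearMap.range (koszulDiff y (k + 1)) := by
  obtain ⟨b, rfl⟩ := hb
  obtain ⟨a', ha'⟩ := @hy (a + y 0 • b) (by rwa [LinearMap.mem_ker, map_add, map_smul])
  refine ⟨glue (-b) a', ?_⟩
  rw [koszulDiff_succ_succ, map_neg, neg_neg, ha', smul_neg, add_neg_cancel_right]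

lemma mem_range_of_koszulDiff_glue_eq_zero {y : Fin (n + 1) → R} (hy : IsReverseRegular y)
    {b : KoszulIndex n 0 → R} {a : KoszulIndex n 1 → R}
    (h : koszulDiff (Fin.tail y) 0 a + y 0 • b = 0) :
    b ∈ LinearMap.range (koszulDiff (Fin.tail y) 0) := by
  have hrange : y '' Set.Ioi 0 = Set.range (Fin.tail y) := by
    rw [← bot_eq_zero, Set.Ioi_bot, bot_eq_zero, ← Fin.range_succ, ← Set.range_comp]
    rfl
  refine mem_range_koszulDiff_zero (hrange ▸ hy 0 _ ?_)
  have h0 : y 0 * b default = -∑ i, Fin.tail y i * a (point i) := by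
    rw [koszulDiff_zero_apply] at h
    exact eq_neg_of_add_eq_zero_right (congrFun h default)
  rw [hrange, h0]
  exact neg_mem (sum_mem fun i _ => Ideal.mul_mem_right _ _ (Ideal.subset_span ⟨i, rfl⟩))

lemma ker_koszulDiff_le : ∀ {n : ℕ} {y : Fin n → R} (_ : IsReverseRegular y) (k : ℕ),
    LinearMap.ker (koszulDiff y k) ≤ LinearMap.range (koszulDiff y (k + 1))
  | 0, _, _, _ => fun f _ => ⟨0, funext fun i => i.elim⟩
  | n + 1, y, hy, 0 => fun f hf => by
    obtain ⟨b, a, rfl⟩ := exists_eq_glue f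
    exact glue_mem_range_koszulDiff (ker_koszulDiff_le hy.tail 0)
      (mem_range_of_koszulDiff_glue_eq_zero hy hf) hf
  | n + 1, y, hy, k + 1 => fun f hf => by
    obtain ⟨b, a, rfl⟩ := exists_eq_glue f
    rw [LinearMap.mem_ker, koszulDiff_succ_succ, glue_eq_zero] at hf
    exact glue_mem_range_koszulDiff (ker_koszulDiff_le hy.tail (k + 1))
      (ker_koszulDiff_le hy.tail k (neg_eq_zero.mp hf.1)) hf.2

lemma exact_koszulDiff {y : Fin n → R} (hy : IsReverseRegular y) (k : ℕ) :
    Function.Exact (koszulDiff y (k + 1)) (koszulDiff y k) :=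
  fun _ => ⟨fun hf => ker_koszulDiff_le hy k hf, fun ⟨g, hg⟩ => hg ▸ koszulDiff_koszulDiff y k g⟩

/-- Every entry of the matrix of `φ` is a linear form. -/
def IsLinearMatrix {σ ι κ : Type*}
    (φ : (ι → MvPolynomial σ R) →ₗ[MvPolynomial σ R] (κ → MvPolynomial σ R)) : Prop :=
  ∀ (c : ι → R) s, (φ (fun i => C (c i)) s).IsHomogeneous 1

lemma isLinearMatrix_koszulDiff {σ : Type*} : ∀ {n : ℕ} {y : Fin n → MvPolynomial σ R}
    (_ : ∀ i, (y i).IsHomogeneous 1) (k : ℕ), IsLinearMatrix (koszulDiff y k)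
  | 0, _, _, _ => fun _ _ => isHomogeneous_zero _ _ _
  | n + 1, y, hy, k => fun c s => by
    obtain ⟨b, a, rfl⟩ := exists_eq_glue c
    have hc : (fun i => C (glue b a i)) =
        (glue (fun i => C (b i)) fun i => C (a i) : _ → MvPolynomial σ R) :=
      funext (Sum.rec (fun _ => rfl) fun _ => rfl)
    have htop (k) (a : KoszulIndex n (k + 1) → R) (b : KoszulIndex n k → R) (s) :
        IsHomogeneous ((koszulDiff (Fin.tail y) k (fun i => C (a i)) +
          y 0 • (fun i => C (b i)) : _ → MvPolynomial σ R) s) 1 :=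
      (isLinearMatrix_koszulDiff (fun i => hy i.succ) k a s).add
        ((hy 0).mul (isHomogeneous_C σ (b s)))
    refine hc ▸ ?_
    obtain _ | k := k
    · exact htop 0 a b s
    · rw [koszulDiff_succ_succ]
      obtain s | s := s
      · exact (isLinearMatrix_koszulDiff (fun i => hy i.succ) k b s).neg
      · exact htop (k + 1) a b s

end Koszul

section BettiDiagram

lemma exact_conj {M N P M' N' P' : Type*} [Zero P] [Zero P'] (e₁ : M ≃ M') (e₂ : N ≃ N')
    (e₃ : P ≃ P') (h₀ : e₃ 0 = 0) {f : M → N} {g : N → P} (h : Function.Exact f g) :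
    Function.Exact (e₂ ∘ f ∘ e₁.symm) (e₃ ∘ g ∘ e₂.symm) := by
  intro y
  rw [Function.comp_apply, Function.comp_apply, ← h₀, e₃.apply_eq_iff_eq, h,
    ← Function.comp_assoc, e₁.symm.surjective.range_comp, Set.range_comp, e₂.image_eq_preimage_symm,
    Set.mem_preimage]

variable {K : Type} [Field K] {r : ℕ}

lemma eq_of_fin_ite {n d j : ℕ} {β : ℕ → ℕ} (hβ : ∀ j, β j = if j = d then n else 0)
    (t : Fin (β j)) : j = d :=
  by_contra fun h => (Fin.cast ((hβ j).trans (if_neg h)) t).elim0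

lemma nonempty_sigma_fin_equiv {ι : Type*} [Fintype ι] {d : ℕ} {β : ℕ → ℕ}
    (hβ : ∀ j, β j = if j = d then Fintype.card ι else 0) :
    Nonempty (((j : ℕ) × Fin (β j)) ≃ ι) := by
  have hbij : Function.Bijective fun t : Fin (β d) => (⟨d, t⟩ : (j : ℕ) × Fin (β j)) := by
    refine ⟨fun _ _ h => by simpa using h, fun ⟨j, t⟩ => ?_⟩
    obtain rfl := eq_of_fin_ite hβ t
    exact ⟨t, rfl⟩
  exact ⟨(Equiv.ofBijective _ hbij).symm.trans
    ((finCongr ((hβ d).trans (if_pos rfl))).trans (Fintype.equivFin ι).symm)⟩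

lemma exists_freeGr_equiv {ι : Type} [Fintype ι] {d : ℕ} {β : ℕ → ℕ}
    (hβ : ∀ j, β j = if j = d then Fintype.card ι else 0) :
    ∃ (e : ((j : ℕ) × Fin (β j)) → ι) (L : AMD.FreeGr K r β ≃ₗ[PS K r] (ι → PS K r)),
      (∀ a, ∃ c : ι → K, L (Finsupp.single a 1) = fun t => C (c t)) ∧
        ∀ v a, L.symm v a = v (e a) := by
  classical
  obtain ⟨e⟩ := nonempty_sigma_fin_equiv hβ
  refine ⟨e, (Finsupp.domLCongr e).trans (Finsupp.linearEquivFunOnFinite _ _ _),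
    fun a => ⟨Pi.single (e a) 1, ?_⟩, fun v a => ?_⟩
  · ext1 t
    obtain rfl | ht := eq_or_ne t (e a)
    · simp
    · simp [ht, Finsupp.single_eq_of_ne ht]
  · simp [Finsupp.domLCongr_symm]

lemma hasBettiDiagram_of_linear_resolution {I : Ideal (PS K r)} {d : ℕ} {ι : ℕ → Type}
    [∀ i, Fintype (ι i)] {ε : (ι 0 → PS K r) →ₗ[PS K r] PS K r}
    {φ : ∀ i, (ι (i + 1) → PS K r) →ₗ[PS K r] (ι i → PS K r)}
    (hε : ∀ c : ι 0 → K, (ε fun t => C (c t)).IsHomogeneous (1 + d))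
    (hφ : ∀ i, IsLinearMatrix (φ i))
    (hI : LinearMap.range ε = I) (h₀ : Function.Exact (φ 0) ε)
    (hexact : ∀ i, Function.Exact (φ (i + 1)) (φ i)) {β : ℕ → ℕ → ℕ}
    (hβ : ∀ i j, β (i + 1) j = if j = d then Fintype.card (ι i) else 0) :
    AMD.HasBettiDiagram K r I β := by
  choose e L hL hLsymm using fun i => exists_freeGr_equiv (K := K) (r := r) (hβ i)
  refine ⟨fun i => (L i).symm.toLinearMap ∘ₗ φ i ∘ₗ (L (i + 1)).toLinearMap,
    ε ∘ₗ (L 0).toLinearMap, fun j t => ?_,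
    fun i j t j' t' => Or.inr ⟨1, le_rfl, ?_, ?_⟩, ?_, ?_, ?_⟩
  · obtain ⟨c, hc⟩ := hL 0 ⟨j, t⟩
    have h := hε c
    rwa [← hc, ← eq_of_fin_ite (hβ 0) t] at h
  · rw [eq_of_fin_ite (hβ (i + 1)) t, eq_of_fin_ite (hβ i) t']
    ring
  · obtain ⟨c, hc⟩ := hL (i + 1) ⟨j, t⟩
    have h := hφ i c (e i ⟨j', t'⟩)
    rwa [← hc, ← hLsymm i (φ i _)] at h
  · rw [LinearMap.range_comp, LinearEquiv.range, Submodule.map_top, hI]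
  · exact LinearMap.exact_iff.mp (exact_conj (L 1).symm.toEquiv (L 0).symm.toEquiv (.refl _) rfl h₀)
  · exact fun i => LinearMap.exact_iff.mp (exact_conj (L (i + 2)).symm.toEquiv
      (L (i + 1)).symm.toEquiv (L i).symm.toEquiv (map_zero (L i).symm) (hexact i))

lemma hasBettiDiagram_map {I : Ideal (PS K r)} {β : ℕ → ℕ → ℕ} (h : AMD.HasBettiDiagram K r I β)
    {σ : PS K r ≃ₐ[K] PS K r} (hσ : AMD.IsGrAut K r σ) : AMD.HasBettiDiagram K r (I.map σ) β := by
  obtain ⟨φ, ε, hε, hφ, hI, h₀, hexact⟩ := h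
  have hhom {p : PS K r} {n : ℕ} (hp : p.IsHomogeneous n) : (σ p).IsHomogeneous n := by
    rw [← AlgEquiv.coe_toAlgHom, aeval_unique (σ : PS K r →ₐ[K] PS K r), ← one_mul n]
    exact hp.aeval _ hσ
  let τ : PS K r ≃+* PS K r := σ
  let := RingHomInvPair.of_ringEquiv τ
  let := RingHomInvPair.of_ringEquiv_symm τ
  let s : PS K r ≃ₛₗ[(τ : PS K r →+* PS K r)] PS K r := τ.toSemilinearEquiv
  let T (β : ℕ → ℕ) : AMD.FreeGr K r β ≃ₛₗ[(τ : PS K r →+* PS K r)] AMD.FreeGr K r β :=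
    Finsupp.mapRange.linearEquiv s
  have hT {β : ℕ → ℕ} (a) : (T β).symm (Finsupp.single a 1) = Finsupp.single a 1 :=
    (Finsupp.mapRange_single (hf := map_zero τ.symm)).trans (congrArg _ (map_one τ.symm))
  refine ⟨fun i => (T _).toLinearMap ∘ₛₗ φ i ∘ₛₗ (T _).symm.toLinearMap,
    s.toLinearMap ∘ₛₗ ε ∘ₛₗ (T _).symm.toLinearMap, fun j t => ?_,
    fun i j t j' t' => ?_, ?_, ?_, ?_⟩
  · have h := hhom (hε j t)
    rwa [← hT] at h
  · obtain h | ⟨n, hn, hdeg, h⟩ := hφ i j t j' t'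
    · left
      rw [← hT] at h
      exact (congrArg τ h).trans (map_zero τ)
    · refine Or.inr ⟨n, hn, hdeg, ?_⟩
      rw [← hT] at h
      exact hhom h
  · ext p
    rw [← hI, Ideal.mem_map_of_equiv]
    constructor
    · rintro ⟨v, rfl⟩
      exact ⟨_, ⟨(T _).symm v, rfl⟩, rfl⟩
    · rintro ⟨_, ⟨v, rfl⟩, rfl⟩
      exact ⟨T _ v, congrArg (s ∘ ε) ((T _).symm_apply_apply v)⟩
  · exact LinearMap.exact_iff.mp (exact_conj (T _).toEquiv (T _).toEquiv s.toEquiv (map_zero s)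
      (LinearMap.exact_iff.mpr h₀))
  · exact fun i => LinearMap.exact_iff.mp (exact_conj (T _).toEquiv (T _).toEquiv (T _).toEquiv
      (map_zero (T _)) (LinearMap.exact_iff.mpr (hexact i)))

end BettiDiagram

section HilbertBurch

variable {R : Type*} [CommRing R] [IsDomain R]

/- Cramer's rule: in a complex `Rᵐ → R^ι → Rᵏ` with `|ι| = |m| + |k|`, a maximal minor of the first
map annihilates the homology if the complementary minor of the second map does not vanish. -/
lemma det_smul_mem_range_mulVecLin {ι m k : Type*} [Fintype ι] [Fintype m] [DecidableEq m]
    [Fintype k] [DecidableEq k] {A : Matrix ι m R} {B : Matrix k ι R} (e : m ⊕ k ≃ ι)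
    (hBA : B * A = 0) (hB : (B.submatrix id (e ∘ Sum.inr)).det ≠ 0) {a : ι → R}
    (ha : B.mulVec a = 0) :
    (A.submatrix (e ∘ Sum.inl) id).det • a ∈ LinearMap.range A.mulVecLin := by
  set A₁ := A.submatrix (e ∘ Sum.inl) id
  refine ⟨A₁.adjugate.mulVec (a ∘ e ∘ Sum.inl), sub_eq_zero.mp ?_⟩
  rw [Matrix.mulVecLin_apply]
  set d := A.mulVec (A₁.adjugate.mulVec (a ∘ e ∘ Sum.inl)) - A₁.det • a with hd
  have hBd : B.mulVec d = 0 := by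
    rw [hd, Matrix.mulVec_sub, Matrix.mulVec_mulVec, hBA, Matrix.zero_mulVec, Matrix.mulVec_smul,
      ha, smul_zero, sub_zero]
  have hleft (j : m) : d (e (Sum.inl j)) = 0 := by
    have h : A₁.mulVec (A₁.adjugate.mulVec (a ∘ e ∘ Sum.inl)) = A₁.det • (a ∘ e ∘ Sum.inl) := by
      rw [Matrix.mulVec_mulVec, Matrix.mul_adjugate, Matrix.smul_mulVec, Matrix.one_mulVec]
    exact sub_eq_zero.mpr (congrFun h j)
  have hright : d ∘ e ∘ Sum.inr = 0 := by
    refine Matrix.eq_zero_of_mulVec_eq_zero hB (funext fun i => ?_)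
    have h := congrFun hBd i
    rw [Matrix.mulVec, dotProduct, ← e.sum_comp, Fintype.sum_sum_type] at h
    simp only [hleft, mul_zero, Finset.sum_const_zero, zero_add] at h
    exact h
  exact funext (e.surjective.forall.mpr (Sum.rec hleft (congrFun hright)))

lemma mem_range_of_isRelPrime [DecompositionMonoid R] {m M : Type*} [AddCommGroup M] [Module R M]
    [Module.IsTorsionFree R M] {f : (m → R) →ₗ[R] M} (hf : Function.Injective f) {d d' : R}
    (hd : d ≠ 0) (hdd' : IsRelPrime d d') {x : M} (hx : d • x ∈ LinearMap.range f)
    (hx' : d' • x ∈ LinearMap.range f) : x ∈ LinearMap.range f := by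
  obtain ⟨u, hu⟩ := hx
  obtain ⟨v, hv⟩ := hx'
  have huv : d' • u = d • v := hf (by rw [map_smul, map_smul, hu, hv, smul_comm])
  have hdvd (j : m) : d ∣ u j := hdd'.dvd_of_dvd_mul_left ⟨v j, congrFun huv j⟩
  choose w hw using hdvd
  refine ⟨w, smul_right_injective M hd ?_⟩
  change d • f w = d • x
  rw [← map_smul, ← hu]
  exact congrArg f (funext fun j => (hw j).symm)

end HilbertBurch

section Coprimality

variable {σ K : Type*} [Field K]

lemma vars_subset_of_dvd {f g : MvPolynomial σ K} (hf : f ≠ 0) (hgf : g ∣ f) : g.vars ⊆ f.vars := by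
  classical
  obtain ⟨h, rfl⟩ := hgf
  rw [vars_def, vars_def, degrees_mul_eq (left_ne_zero_of_mul hf) (right_ne_zero_of_mul hf),
    Multiset.toFinset_add]
  exact Finset.subset_union_left

lemma dvd_aeval_update_zero [DecidableEq σ] {f g h : MvPolynomial σ K} {i : σ} (hf : f ≠ 0)
    (hfi : f ∈ supported K {i}ᶜ) (hgf : g ∣ f) (hgh : g ∣ h) :
    g ∣ aeval (Function.update X i 0) h := by
  have hgi : i ∉ g.vars := fun hi =>
    mem_supported.mp hfi (vars_subset_of_dvd hf hgf hi) rfl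
  have hg : aeval (Function.update X i 0 : σ → MvPolynomial σ K) g = g := by
    conv_rhs => rw [← aeval_X_left_apply g]
    exact eval₂Hom_congr' rfl
      (fun j hj _ => Function.update_of_ne (ne_of_mem_of_not_mem hj hgi) ..) rfl
  exact hg ▸ map_dvd (aeval (Function.update X i 0)) hgh

end Coprimality

section ConicSyzygy

variable {R : Type*} [CommRing R]

/-- The linear syzygies common to `y` and `conicQuadric y`. -/
def conicSyzygy (y : Fin 5 → R) : Matrix (Fin 5) (Fin 3) R :=
  !![y 4, y 3, 0;
    y 3, -y 2, -y 4;
    0, y 1, y 3;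
    -y 1, -y 0, -y 2;
    -y 0, 0, y 1]

lemma of_conicQuadric_mul_conicSyzygy (y : Fin 5 → R) :
    Matrix.of ![y, conicQuadric y] * conicSyzygy y = 0 := by
  ext i j
  fin_cases i <;> fin_cases j <;>
    simp [Matrix.mul_apply, Fin.sum_univ_five, conicQuadric, conicSyzygy] <;> ring

/-- The minor of the rows `y` and `conicQuadric y` in the columns `0` and `1`. -/
def conicMinor (y : Fin 5 → R) : R := y 0 * (y 0 * y 3) - y 1 * (y 0 * y 2 + y 1 * y 1)

lemma det_conicQuadric_castAdd (y : Fin 5 → R) :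
    ((Matrix.of ![y, conicQuadric y]).submatrix id (Fin.castAdd 3)).det = conicMinor y :=
  Matrix.det_fin_two _

lemma det_conicQuadric_natAdd (y : Fin 5 → R) :
    ((Matrix.of ![y, conicQuadric y]).submatrix id (Fin.natAdd 3)).det =
      -conicMinor (y ∘ Fin.rev) := by
  have h : ((Matrix.of ![y, conicQuadric y]).submatrix id (Fin.natAdd 3)).det =
      y 3 * (y 2 * y 4 + y 3 * y 3) - y 4 * (y 1 * y 4) := Matrix.det_fin_two _
  rw [h]
  change _ = -(y 4 * (y 4 * y 1) - y 3 * (y 4 * y 2 + y 3 * y 3))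
  ring

lemma det_conicSyzygy_natAdd (y : Fin 5 → R) :
    ((conicSyzygy y).submatrix (Fin.natAdd 2) id).det = -conicMinor y := by
  rw [Matrix.det_fin_three]
  change 0 * -y 0 * y 1 - 0 * -y 2 * 0 - y 1 * -y 1 * y 1 + y 1 * -y 2 * -y 0 + y 3 * -y 1 * 0 -
    y 3 * -y 0 * -y 0 = -(y 0 * (y 0 * y 3) - y 1 * (y 0 * y 2 + y 1 * y 1))
  ring

lemma det_conicSyzygy_castAdd (y : Fin 5 → R) :
    ((conicSyzygy y).submatrix (Fin.castAdd 2) id).det = conicMinor (y ∘ Fin.rev) := by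
  rw [Matrix.det_fin_three]
  change y 4 * -y 2 * y 3 - y 4 * -y 4 * y 1 - y 3 * y 3 * y 3 + y 3 * -y 4 * 0 + 0 * y 3 * y 1 -
    0 * -y 2 * 0 = y 4 * (y 4 * y 1) - y 3 * (y 4 * y 2 + y 3 * y 3)
  ring

variable (K : Type*) [Field K]

lemma conicMinor_X_comp_ne_zero {e : Fin 5 → Fin 5} (he : e 0 ≠ e 1) (he' : e 3 ≠ e 1) :
    conicMinor (X ∘ e : Fin 5 → MvPolynomial (Fin 5) K) ≠ 0 := by
  intro h
  simpa [conicMinor, he, he'] using congrArg (eval fun i => if i = e 1 then 0 else 1) h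

lemma conicMinor_X_comp_mem_supported {e : Fin 5 → Fin 5} (he : e.Injective) :
    conicMinor (X ∘ e : Fin 5 → MvPolynomial (Fin 5) K) ∈ supported K {e 4}ᶜ := by
  have hX {i} (hi : i ≠ 4) : X (e i) ∈ supported K {e 4}ᶜ := X_mem_supported.mpr (he.ne hi)
  have h0 := hX (i := 0) (by decide)
  have h1 := hX (i := 1) (by decide)
  exact sub_mem (mul_mem h0 (mul_mem h0 (hX (by decide))))
    (mul_mem h1 (add_mem (mul_mem h0 (hX (by decide))) (mul_mem h1 h1)))

variable {K} in
lemma dvd_X_pow_three {e : Fin 5 → Fin 5} (he : e.Injective) {g : MvPolynomial (Fin 5) K}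
    (hg : g ∣ conicMinor (X ∘ e)) (hg' : g ∣ conicMinor (X ∘ e ∘ Fin.rev)) : g ∣ X (e 3) ^ 3 := by
  have h := dvd_aeval_update_zero
    (conicMinor_X_comp_ne_zero K (he.ne (by decide)) (he.ne (by decide)))
    (conicMinor_X_comp_mem_supported K he) hg hg'
  have h3 : e 3 ≠ e 4 := he.ne (by decide)
  simpa [conicMinor, Fin.rev, h3, pow_succ, mul_assoc] using h

lemma isRelPrime_conicMinor :
    IsRelPrime (conicMinor (X : Fin 5 → MvPolynomial (Fin 5) K)) (conicMinor (X ∘ Fin.rev)) := by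
  intro g hg hg'
  have h3 : g ∣ X 3 ^ 3 := dvd_X_pow_three (e := id) Function.injective_id hg hg'
  have h1 : g ∣ X 1 ^ 3 := dvd_X_pow_three (e := Fin.rev) Fin.rev_injective hg'
    (by rwa [Fin.rev_involutive.comp_self])
  have h31 : IsRelPrime (X 3 : MvPolynomial (Fin 5) K) (X 1) :=
    (X_prime (i := 3)).irreducible.isRelPrime_iff_not_dvd.mpr (by simp [X_dvd_X])
  exact h31.pow h3 h1

lemma conicSyzygy_injective :
    Function.Injective (conicSyzygy (X : Fin 5 → MvPolynomial (Fin 5) K)).mulVecLin := by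
  refine (injective_iff_map_eq_zero _).mpr fun c hc => ?_
  refine Matrix.eq_zero_of_mulVec_eq_zero (M := (conicSyzygy X).submatrix (Fin.natAdd 2) id)
    ?_ (funext fun i => congrFun hc _)
  rw [det_conicSyzygy_natAdd]
  exact neg_ne_zero.mpr (conicMinor_X_comp_ne_zero K (e := id) (by decide) (by decide))

theorem exact_conicSyzygy :
    Function.Exact (conicSyzygy (X : Fin 5 → MvPolynomial (Fin 5) K)).mulVecLin
      (Matrix.of ![X, conicQuadric X]).mulVecLin := by
  have hne := conicMinor_X_comp_ne_zero K (e := id) (by decide) (by decide)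
  have hne' := conicMinor_X_comp_ne_zero K (e := Fin.rev) (by decide) (by decide)
  refine LinearMap.exact_of_comp_eq_zero_of_ker_le_range ?_ fun a ha => ?_
  · rw [← Matrix.mulVecLin_mul, of_conicQuadric_mul_conicSyzygy, Matrix.mulVecLin_zero]
  refine mem_range_of_isRelPrime (conicSyzygy_injective K) hne' (isRelPrime_conicMinor K).symm ?_ ?_
  · rw [← det_conicSyzygy_castAdd]
    refine det_smul_mem_range_mulVecLin finSumFinEquiv (of_conicQuadric_mul_conicSyzygy X) ?_ ha
    exact (det_conicQuadric_natAdd _).trans_ne (neg_ne_zero.mpr hne')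
  · rw [← Submodule.neg_mem_iff, ← neg_smul, ← det_conicSyzygy_natAdd]
    exact det_smul_mem_range_mulVecLin ((Equiv.sumComm _ _).trans finSumFinEquiv)
      (of_conicQuadric_mul_conicSyzygy X) ((det_conicQuadric_castAdd _).trans_ne hne) ha

end ConicSyzygy

section Kernel

/-- Expresses the quadrics `conicQuadric y` as linear combinations of `y`. -/
def conicMatrix {R : Type*} [CommRing R] (y : Fin 5 → R) : Matrix (Fin 5) (Fin 5) R :=
  !![0, y 1, y 0, 0, 0;
    0, 0, 0, y 0, 0;
    y 4, 0, 0, -y 1, 0;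
    0, y 4, 0, 0, 0;
    0, 0, y 4, y 3, 0]

section

variable {R : Type*} [CommRing R] (y : Fin 5 → R)

lemma conicMatrix_mulVec_self : (conicMatrix y).mulVec y = conicQuadric y := by
  ext i
  fin_cases i <;> simp [conicMatrix, conicQuadric, Matrix.mulVec, dotProduct, Fin.sum_univ_five] <;>
    ring

lemma conicMatrix_mulVec_conicQuadric :
    (conicMatrix y).mulVec (conicQuadric y) = (y 0 * y 4) • y := by
  ext i
  fin_cases i <;> simp [conicMatrix, conicQuadric, Matrix.mulVec, dotProduct, Fin.sum_univ_five] <;>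
    ring

/-- The span over `R` of the elements `y i * ω - conicQuadric y i` of `R[ω]`, where
`ω ^ 2 = y 0 * y 4`. It is an ideal of `R[ω]`. -/
def missingConicIdeal : Ideal (QuadraticAlgebra R (y 0 * y 4) 0) where
  carrier := {z | ∃ a : Fin 5 → R, z.re = -(a ⬝ᵥ conicQuadric y) ∧ z.im = a ⬝ᵥ y}
  zero_mem' := ⟨0, by simp⟩
  add_mem' := by
    rintro z z' ⟨a, hre, him⟩ ⟨a', hre', him'⟩
    refine ⟨a + a', ?_, ?_⟩
    · rw [QuadraticAlgebra.re_add, hre, hre', add_dotProduct, neg_add]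
    · rw [QuadraticAlgebra.im_add, him, him', add_dotProduct]
  smul_mem' := by
    rintro u z ⟨a, hre, him⟩
    have hy : Matrix.vecMul a (conicMatrix y) ⬝ᵥ y = a ⬝ᵥ conicQuadric y := by
      rw [← Matrix.dotProduct_mulVec, conicMatrix_mulVec_self]
    have hq : Matrix.vecMul a (conicMatrix y) ⬝ᵥ conicQuadric y = y 0 * y 4 * (a ⬝ᵥ y) := by
      rw [← Matrix.dotProduct_mulVec, conicMatrix_mulVec_conicQuadric, dotProduct_smul, smul_eq_mul]
    refine ⟨u.re • a - u.im • Matrix.vecMul a (conicMatrix y), ?_, ?_⟩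
    · rw [smul_eq_mul, QuadraticAlgebra.re_mul, hre, him, sub_dotProduct, smul_dotProduct,
        smul_dotProduct, hq, smul_eq_mul, smul_eq_mul]
      ring
    · rw [smul_eq_mul, QuadraticAlgebra.im_mul, hre, him, sub_dotProduct, smul_dotProduct,
        smul_dotProduct, hy, smul_eq_mul, smul_eq_mul]
      ring

end

variable (K : Type) [Field K]

/-- The pull-back of coordinates under the projection of the Veronese surface. -/
def projectionPullback : PS K 4 →ₐ[K] PS K 5 := aeval ![X 0, X 1, X 2 - X 3, X 4, X 5]

lemma veroneseMap_projectionPullback (f : PS K 4) :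
    veroneseMap K (projectionPullback K f) = aeval (projectedConic K) f := by
  refine DFunLike.congr_fun (f := (veroneseMap K).comp (projectionPullback K)) ?_ f
  ext1 i
  fin_cases i <;> simp [veroneseMap, projectionPullback, projectedConic]

/-- Adjoins the coordinate `ω = x₂` of `ℙ⁵` to the coordinate ring of `ℙ⁴`. It is a square root of
`y 0 * y 4` on the Veronese surface. -/
def adjoinMissingConic : PS K 5 →ₐ[K] QuadraticAlgebra (PS K 4) (X 0 * X 4) 0 :=
  aeval ![.C (X 0), .C (X 1), .omega, .omega - .C (X 2), .C (X 3), .C (X 4)]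

variable {K}

lemma adjoinMissingConic_projectionPullback (f : PS K 4) :
    adjoinMissingConic K (projectionPullback K f) = algebraMap _ _ f := by
  suffices (adjoinMissingConic K).comp (projectionPullback K) = Algebra.algHom K _ _ from
    DFunLike.congr_fun this f
  ext1 i
  fin_cases i <;> simp [adjoinMissingConic, projectionPullback] <;> rfl

lemma veroneseIdeal_le_comap_missingConicIdeal :
    AMD.veroneseIdeal K ≤ (missingConicIdeal X).comap (adjoinMissingConic K) := by
  have hsingle (z : QuadraticAlgebra (PS K 4) (X 0 * X 4) 0) (i : Fin 5) (c : PS K 4)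
      (hre : z.re = -(c * conicQuadric X i)) (him : z.im = c * X i) : z ∈ missingConicIdeal X :=
    ⟨Pi.single i c, by rw [hre, single_dotProduct], by rw [him, single_dotProduct]⟩
  rw [veroneseIdeal_le_iff]
  refine ⟨hsingle _ 0 1 ?_ ?_, hsingle _ 1 (-1) ?_ ?_, hsingle _ 2 1 ?_ ?_, hsingle _ 0 0 ?_ ?_,
    hsingle _ 3 (-1) ?_ ?_, hsingle _ 4 1 ?_ ?_⟩ <;>
  simp [adjoinMissingConic, conicQuadric] <;> ring

lemma aeval_dotProduct_conicQuadric (a : Fin 5 → PS K 4) :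
    aeval (projectedConic K) (a ⬝ᵥ conicQuadric X) =
      aeval (projectedConic K) (a ⬝ᵥ X) * missingConic K := by
  have hq (i : Fin 5) : aeval (projectedConic K) (conicQuadric (X : Fin 5 → PS K 4) i) =
      projectedConic K i * missingConic K := by
    rw [projectedConic_mul_missingConic]
    fin_cases i <;> simp [conicQuadric]
  simp only [dotProduct, map_sum, map_mul, aeval_X, hq, Finset.sum_mul, mul_assoc]

theorem mem_ker_aeval_projectedConic {f : PS K 4} :
    f ∈ RingHom.ker (aeval (projectedConic K)) ↔
      ∃ a : Fin 5 → PS K 4, a ⬝ᵥ X = 0 ∧ a ⬝ᵥ conicQuadric X = f := by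
  constructor
  · intro hf
    have hmem : projectionPullback K f ∈ AMD.veroneseIdeal K := by
      rwa [← ker_veroneseMap, RingHom.mem_ker, veroneseMap_projectionPullback]
    obtain ⟨a, hre, him⟩ := veroneseIdeal_le_comap_missingConicIdeal hmem
    rw [adjoinMissingConic_projectionPullback] at hre him
    exact ⟨-a, by rw [neg_dotProduct, ← him]; exact neg_zero,
      by rw [neg_dotProduct, ← hre]; rfl⟩
  · rintro ⟨a, ha, rfl⟩
    rw [RingHom.mem_ker, aeval_dotProduct_conicQuadric, ha, map_zero, zero_mul]

end Kernel

section Cancellation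

/- In a complex `V₄ → V₃ → V₂ → V₁ → V₀`, the summand `N` of `V₂ = N ⊕ W` parametrizes the elements
of `ker d₀` killed by `θ`, so dropping it resolves `θ (ker d₀)` instead of `ker d₀`. -/

variable {R : Type*} [CommRing R] {N W V₀ V₁ V₂ V₃ V₄ U : Type*} [AddCommGroup N] [Module R N]
  [AddCommGroup W] [Module R W] [AddCommGroup U] [Module R U] [AddCommGroup V₀] [Module R V₀]
  [AddCommGroup V₁] [Module R V₁] [AddCommGroup V₂] [Module R V₂] [AddCommGroup V₃] [Module R V₃]
  [AddCommGroup V₄] [Module R V₄] {d₃ : V₄ →ₗ[R] V₃} {d₂ : V₃ →ₗ[R] V₂} {d₁ : V₂ →ₗ[R] V₁}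
  {d₀ : V₁ →ₗ[R] V₀} {θ : V₁ →ₗ[R] U} {ν : N →ₗ[R] V₂} {t : V₂ →ₗ[R] N} {p : V₂ →ₗ[R] W}
  {s : W →ₗ[R] V₂}

lemma exact_cancel_left (h₃ : Function.Exact d₃ d₂) (h₂ : Function.Exact d₂ d₁)
    (hν : Function.Injective (d₁ ∘ₗ ν)) (hst : ∀ b, s (p b) + ν (t b) = b) :
    Function.Exact d₃ (p ∘ₗ d₂) := by
  refine fun x => Iff.trans ⟨fun hx => ?_, fun hx => (congrArg p hx).trans (map_zero p)⟩ (h₃ x)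
  have hd : ν (t (d₂ x)) = d₂ x := by
    have h := hst (d₂ x)
    rwa [show p (d₂ x) = 0 from hx, map_zero, zero_add] at h
  have ht : t (d₂ x) = 0 := by
    refine hν ?_
    rw [LinearMap.comp_apply, hd, h₂.apply_apply_eq_zero, map_zero]
  rw [← hd, ht, map_zero]

lemma exact_cancel_right (h₂ : Function.Exact d₂ d₁) (h₁ : Function.Exact d₁ d₀)
    (hθ : Function.Exact (d₁ ∘ₗ ν) (d₀.prod θ)) (hst : ∀ b, s (p b) + ν (t b) = b)
    (hps : ∀ w, p (s w) = w) (hpν : ∀ c, p (ν c) = 0) :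
    Function.Exact (p ∘ₗ d₂) (θ ∘ₗ d₁ ∘ₗ s) := by
  refine fun w => ⟨fun hw => ?_, ?_⟩
  · obtain ⟨c, hc⟩ := (hθ (d₁ (s w))).mp (Prod.ext (h₁.apply_apply_eq_zero _) hw)
    obtain ⟨x, hx⟩ := (h₂ (s w - ν c)).mp (by rw [map_sub, ← hc]; exact sub_self _)
    refine ⟨x, ?_⟩
    rw [LinearMap.comp_apply, hx, map_sub, hps, hpν, sub_zero]
  · rintro ⟨x, rfl⟩
    have hθν (c : N) : θ (d₁ (ν c)) = 0 := congrArg Prod.snd (hθ.apply_apply_eq_zero c)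
    have h := congrArg (θ ∘ₗ d₁) (hst (d₂ x))
    rwa [map_add, LinearMap.comp_apply _ _ (ν _), hθν, add_zero, LinearMap.comp_apply _ _ (d₂ x),
      h₂.apply_apply_eq_zero, map_zero] at h

lemma range_cancel (h₁ : Function.Exact d₁ d₀) (hθν : ∀ c, θ (d₁ (ν c)) = 0)
    (hst : ∀ b, s (p b) + ν (t b) = b) :
    LinearMap.range (θ ∘ₗ d₁ ∘ₗ s) = (LinearMap.ker d₀).map θ := by
  refine le_antisymm ?_ ?_
  · rintro _ ⟨w, rfl⟩
    exact ⟨d₁ (s w), h₁.apply_apply_eq_zero _, rfl⟩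
  · rintro _ ⟨a, ha, rfl⟩
    obtain ⟨b, rfl⟩ := (h₁ a).mp ha
    refine ⟨p b, ?_⟩
    have h := congrArg (θ ∘ₗ d₁) (hst b)
    rwa [map_add, LinearMap.comp_apply _ _ (ν _), hθν, add_zero] at h

end Cancellation

section ConicResolution

open KoszulIndex

section

variable {R : Type*} [CommRing R]

lemma koszulDiff_one_point_zero {n : ℕ} (y : Fin (n + 1) → R) (f : KoszulIndex (n + 1) 2 → R) :
    koszulDiff y 1 f (point 0) = -∑ i, y i.succ * f (Sum.inl (point i)) := by
  obtain ⟨b, a, rfl⟩ := exists_eq_glue f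
  rw [koszulDiff_succ_succ, koszulDiff_zero_apply]
  rfl

lemma koszulDiff_one_point_succ {n : ℕ} (y : Fin (n + 1) → R) (f : KoszulIndex (n + 1) 2 → R)
    (i : Fin n) :
    koszulDiff y 1 f (point i.succ) =
      koszulDiff (Fin.tail y) 1 (fun s => f (Sum.inr s)) (point i) +
        y 0 * f (Sum.inl (point i)) := by
  obtain ⟨b, a, rfl⟩ := exists_eq_glue f
  rw [koszulDiff_succ_succ]
  rfl

/-- The two-element subsets `{i, j}` of `{0, …, 4}`, in the lexicographic order `01, 02, …, 34`. -/
def pairEquiv : Fin 10 ≃ KoszulIndex 5 2 :=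
  Equiv.ofBijective
    ![.inl (point 0), .inl (point 1), .inl (point 2), .inl (point 3), .inr (.inl (point 0)),
      .inr (.inl (point 1)), .inr (.inl (point 2)), .inr (.inr (.inl (point 0))),
      .inr (.inr (.inl (point 1))), .inr (.inr (.inr (.inl (point 0))))]
    (by decide)

/-- The one-element subsets `{i}` of `{0, …, 4}`. -/
def pointEquiv : Fin 5 ≃ KoszulIndex 5 1 := Equiv.ofBijective point (by decide)

/-- The matrix of `koszulDiff y 1` in the bases given by `pairEquiv` and `pointEquiv`. -/
def koszulMatrix (y : Fin 5 → R) : Matrix (Fin 5) (Fin 10) R :=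
  !![-y 1, -y 2, -y 3, -y 4, 0, 0, 0, 0, 0, 0;
    y 0, 0, 0, 0, -y 2, -y 3, -y 4, 0, 0, 0;
    0, y 0, 0, 0, y 1, 0, 0, -y 3, -y 4, 0;
    0, 0, y 0, 0, 0, y 1, 0, y 2, 0, -y 4;
    0, 0, 0, y 0, 0, 0, y 1, 0, y 2, y 3]

lemma koszulDiff_comp_pointEquiv (y : Fin 5 → R) (b : KoszulIndex 5 2 → R) :
    koszulDiff y 1 b ∘ pointEquiv = (koszulMatrix y).mulVec (b ∘ pairEquiv) := by
  refine funext fun i => (?_ : koszulDiff y 1 b (point i) = _)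
  revert i
  simp only [Fin.forall_fin_succ, IsEmpty.forall_iff, koszulDiff_one_point_succ,
    koszulDiff_one_point_zero, Matrix.mulVec, dotProduct, Fin.sum_univ_succ, Fin.tail,
    koszulMatrix, pairEquiv, and_true]
  refine ⟨?_, ?_, ?_, ?_, ?_⟩ <;> simp <;> ring

lemma coe_koszulMatrix_mulVecLin (y : Fin 5 → R) :
    ⇑(koszulMatrix y).mulVecLin = pointEquiv.symm.arrowCongr (.refl R) ∘ koszulDiff y 1 ∘
      (pairEquiv.symm.arrowCongr (.refl R)).symm := by
  refine funext fun b => .trans ?_ (koszulDiff_comp_pointEquiv y (b ∘ pairEquiv.symm)).symm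
  rw [Function.comp_assoc, pairEquiv.symm_comp_self, Function.comp_id, Matrix.mulVecLin_apply]

lemma exact_koszulDiff_koszulMatrix {y : Fin 5 → R} (hy : IsReverseRegular y) :
    Function.Exact (LinearMap.funLeft R R pairEquiv ∘ₗ koszulDiff y 2)
      (koszulMatrix y).mulVecLin := by
  rw [coe_koszulMatrix_mulVecLin]
  exact exact_conj (.refl _) _ _ rfl (exact_koszulDiff hy 1)

lemma exact_koszulMatrix_dotProduct {y : Fin 5 → R} (hy : IsReverseRegular y) :
    Function.Exact (koszulMatrix y).mulVecLin (dotProductBilin R R y) := by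
  have hd : ⇑(dotProductBilin R R y) = Equiv.funUnique (KoszulIndex 5 0) R ∘ koszulDiff y 0 ∘
      (pointEquiv.symm.arrowCongr (.refl R)).symm := by
    ext1 a
    have h := congrFun (koszulDiff_zero_apply y (a ∘ pointEquiv.symm)) default
    have ha (i : Fin 5) : (a ∘ pointEquiv.symm) (point i) = a i :=
      congrArg a (pointEquiv.symm_apply_apply i)
    simp only [ha] at h
    exact h.symm
  rw [coe_koszulMatrix_mulVecLin, hd]
  exact exact_conj _ _ _ rfl (exact_koszulDiff hy 0)

lemma isLinearMatrix_koszulMatrix {σ : Type*} {y : Fin 5 → MvPolynomial σ R}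
    (hy : ∀ i, (y i).IsHomogeneous 1) : IsLinearMatrix (koszulMatrix y).mulVecLin := by
  intro c i
  rw [coe_koszulMatrix_mulVecLin]
  exact isLinearMatrix_koszulDiff hy 1 (c ∘ pairEquiv.symm) (pointEquiv i)

/-- The linear map over `R` with an integer matrix. -/
def intMatrixLin {m n : Type*} [Fintype n] (A : Matrix m n ℤ) : (n → R) →ₗ[R] (m → R) :=
  (A.map (Int.castRingHom R)).mulVecLin

lemma intMatrixLin_mul_apply {l m n : Type*} [Fintype m] [Fintype n] (A : Matrix l m ℤ)
    (B : Matrix m n ℤ) (v : n → R) :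
    intMatrixLin (A * B) v = intMatrixLin A (intMatrixLin B v) := by
  rw [intMatrixLin, Matrix.map_mul, Matrix.mulVecLin_mul]
  rfl

lemma intMatrixLin_one_apply {n : Type*} [Fintype n] [DecidableEq n] (v : n → R) :
    intMatrixLin (1 : Matrix n n ℤ) v = v := by
  rw [intMatrixLin, Matrix.map_one _ (map_zero _) (map_one _), Matrix.mulVecLin_one]
  rfl

lemma intMatrixLin_add_apply {m n : Type*} [Fintype n] (A B : Matrix m n ℤ) (v : n → R) :
    intMatrixLin (A + B) v = intMatrixLin A v + intMatrixLin B v := by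
  rw [intMatrixLin, Matrix.map_add _ (map_add _), Matrix.mulVecLin_add]
  rfl

lemma intMatrixLin_zero_apply {m n : Type*} [Fintype n] (v : n → R) :
    intMatrixLin (0 : Matrix m n ℤ) v = 0 := by
  rw [intMatrixLin, Matrix.map_zero _ (map_zero _), Matrix.mulVecLin_zero]
  rfl

lemma intMatrixLin_C {σ m n : Type*} [Fintype n] (A : Matrix m n ℤ) (c : n → R) :
    intMatrixLin A (fun i => C (c i) : n → MvPolynomial σ R) =
      fun j => C (intMatrixLin A c j) := by
  ext1 j
  simp only [intMatrixLin, Matrix.mulVecLin_apply, Matrix.mulVec, dotProduct, Matrix.map_apply,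
    eq_intCast, map_sum, map_mul, map_intCast]

lemma IsLinearMatrix.comp_intMatrixLin {σ ι κ ρ : Type*} [Fintype ρ]
    {φ : (ι → MvPolynomial σ R) →ₗ[MvPolynomial σ R] (κ → MvPolynomial σ R)}
    (hφ : IsLinearMatrix φ) (A : Matrix ι ρ ℤ) : IsLinearMatrix (φ ∘ₗ intMatrixLin A) := by
  intro c
  rw [LinearMap.comp_apply, intMatrixLin_C]
  exact hφ _

lemma IsLinearMatrix.intMatrixLin_comp {σ ι κ ρ : Type*} [Fintype κ]
    {φ : (ι → MvPolynomial σ R) →ₗ[MvPolynomial σ R] (κ → MvPolynomial σ R)}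
    (hφ : IsLinearMatrix φ) (A : Matrix ρ κ ℤ) : IsLinearMatrix (intMatrixLin A ∘ₗ φ) := by
  refine fun c s => IsHomogeneous.sum _ _ _ fun i _ => ?_
  have h := (isHomogeneous_C σ (A s i : R)).mul (hφ c i)
  rwa [map_intCast, zero_add] at h

/-- Together with `splitInr`, `splitFst` and `splitSnd`, a decomposition `ℤ¹⁰ = ℤ³ ⊕ ℤ⁷` whose
first summand is mapped by `koszulMatrix` to the syzygies `conicSyzygy`. -/
def splitInl : Matrix (Fin 10) (Fin 3) ℤ :=
  !![0, 0, 0;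
    0, 0, 0;
    0, -1, 0;
    -1, 0, 0;
    0, 1, 0;
    -1, 0, 0;
    0, 0, 1;
    0, 0, -1;
    0, 0, 0;
    0, 0, 0]

/-- The inclusion of the second summand of `ℤ¹⁰ = ℤ³ ⊕ ℤ⁷`. -/
def splitInr : Matrix (Fin 10) (Fin 7) ℤ :=
  !![1, 0, 0, 0, 0, 0, 0;
    0, 1, 0, 0, 0, 0, 0;
    0, 0, 1, 0, 0, 0, 0;
    0, 0, 0, 1, 0, 0, 0;
    0, 0, 0, 0, 0, 0, 0;
    0, 0, 0, 0, 0, 0, 0;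
    0, 0, 0, 0, 1, 0, 0;
    0, 0, 0, 0, 0, 0, 0;
    0, 0, 0, 0, 0, 1, 0;
    0, 0, 0, 0, 0, 0, 1]

/-- The projection to the first summand of `ℤ¹⁰ = ℤ³ ⊕ ℤ⁷`. -/
def splitFst : Matrix (Fin 3) (Fin 10) ℤ :=
  !![0, 0, 0, 0, 0, -1, 0, 0, 0, 0;
    0, 0, 0, 0, 1, 0, 0, 0, 0, 0;
    0, 0, 0, 0, 0, 0, 0, -1, 0, 0]

/-- The projection to the second summand of `ℤ¹⁰ = ℤ³ ⊕ ℤ⁷`. -/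
def splitSnd : Matrix (Fin 7) (Fin 10) ℤ :=
  !![1, 0, 0, 0, 0, 0, 0, 0, 0, 0;
    0, 1, 0, 0, 0, 0, 0, 0, 0, 0;
    0, 0, 1, 0, 1, 0, 0, 0, 0, 0;
    0, 0, 0, 1, 0, -1, 0, 0, 0, 0;
    0, 0, 0, 0, 0, 0, 1, 1, 0, 0;
    0, 0, 0, 0, 0, 0, 0, 0, 1, 0;
    0, 0, 0, 0, 0, 0, 0, 0, 0, 1]

lemma splitSnd_splitInr (w : Fin 7 → R) :
    intMatrixLin splitSnd (intMatrixLin splitInr w) = w := by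
  rw [← intMatrixLin_mul_apply, show splitSnd * splitInr = 1 by decide, intMatrixLin_one_apply]

lemma splitSnd_splitInl (c : Fin 3 → R) :
    intMatrixLin splitSnd (intMatrixLin splitInl c) = 0 := by
  rw [← intMatrixLin_mul_apply, show splitSnd * splitInl = 0 by decide, intMatrixLin_zero_apply]

lemma splitInr_splitSnd_add_splitInl_splitFst (b : Fin 10 → R) :
    intMatrixLin splitInr (intMatrixLin splitSnd b) +
      intMatrixLin splitInl (intMatrixLin splitFst b) = b := by
  rw [← intMatrixLin_mul_apply, ← intMatrixLin_mul_apply, ← intMatrixLin_add_apply,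
    show splitInr * splitSnd + splitInl * splitFst = 1 by decide, intMatrixLin_one_apply]

lemma koszulMatrix_comp_splitInl (y : Fin 5 → R) :
    (koszulMatrix y).mulVecLin ∘ₗ intMatrixLin splitInl = (conicSyzygy y).mulVecLin := by
  rw [intMatrixLin, ← Matrix.mulVecLin_mul]
  congr 1
  ext i j
  rw [Matrix.mul_apply]
  fin_cases i <;> fin_cases j <;>
    simp [Fin.sum_univ_succ, koszulMatrix, splitInl, conicSyzygy]

end

variable (K : Type) [Field K]

/-- The cubic generators of the ideal of the projected Veronese surface. -/
def conicGenerators : (Fin 7 → PS K 4) →ₗ[PS K 4] PS K 4 :=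
  dotProductBilin (PS K 4) (PS K 4) (conicQuadric X) ∘ₗ (koszulMatrix X).mulVecLin ∘ₗ
    intMatrixLin splitInr

/-- The linear syzygies of `conicGenerators`. -/
def conicGeneratorSyzygies : (KoszulIndex 5 3 → PS K 4) →ₗ[PS K 4] (Fin 7 → PS K 4) :=
  intMatrixLin splitSnd ∘ₗ LinearMap.funLeft _ _ pairEquiv ∘ₗ koszulDiff X 2

variable {K}

lemma isLinearMatrix_conicGeneratorSyzygies : IsLinearMatrix (conicGeneratorSyzygies K) := by
  refine IsLinearMatrix.intMatrixLin_comp (fun c i => ?_) splitSnd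
  exact isLinearMatrix_koszulDiff (isHomogeneous_X K) 2 c (pairEquiv i)

lemma isHomogeneous_conicQuadric_X (i : Fin 5) :
    (conicQuadric (X : Fin 5 → PS K 4) i).IsHomogeneous 2 := by
  have h (i j : Fin 5) := (isHomogeneous_X K i).mul (isHomogeneous_X K j)
  fin_cases i
  exacts [(h 0 2).add (h 1 1), h 0 3, (h 0 4).sub (h 1 3), h 1 4, (h 2 4).add (h 3 3)]

lemma isHomogeneous_conicGenerators_C (c : Fin 7 → K) :
    IsHomogeneous (conicGenerators K fun t => C (c t)) (1 + 2) :=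
  IsHomogeneous.sum _ _ _ fun i _ => add_comm 2 1 ▸ (isHomogeneous_conicQuadric_X i).mul
    ((isLinearMatrix_koszulMatrix (isHomogeneous_X K)).comp_intMatrixLin splitInr c i)

lemma exact_splitInl_prod :
    Function.Exact ((koszulMatrix (X : Fin 5 → PS K 4)).mulVecLin ∘ₗ intMatrixLin splitInl)
      ((dotProductBilin (PS K 4) (PS K 4) (X : Fin 5 → PS K 4)).prod
        (dotProductBilin (PS K 4) (PS K 4) (conicQuadric X))) := by
  rw [koszulMatrix_comp_splitInl]
  refine fun a => .trans ?_ (exact_conicSyzygy K a)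
  rw [funext_iff, Fin.forall_fin_two]
  exact Prod.ext_iff

lemma range_conicGenerators :
    LinearMap.range (conicGenerators K) = RingHom.ker (aeval (projectedConic K)) := by
  refine (range_cancel (exact_koszulMatrix_dotProduct isReverseRegular_X)
    (fun c => congrArg Prod.snd (exact_splitInl_prod.apply_apply_eq_zero c))
    splitInr_splitSnd_add_splitInl_splitFst).trans (Submodule.ext fun f => ?_)
  refine Iff.trans ?_ mem_ker_aeval_projectedConic.symm
  simp only [dotProduct_comm _ X, dotProduct_comm _ (conicQuadric X)]
  rfl

lemma exact_conicGeneratorSyzygies_conicGenerators :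
    Function.Exact (conicGeneratorSyzygies K) (conicGenerators K) :=
  exact_cancel_right (exact_koszulDiff_koszulMatrix isReverseRegular_X)
    (exact_koszulMatrix_dotProduct isReverseRegular_X) exact_splitInl_prod
    splitInr_splitSnd_add_splitInl_splitFst splitSnd_splitInr splitSnd_splitInl

lemma exact_koszulDiff_conicGeneratorSyzygies :
    Function.Exact (koszulDiff (X : Fin 5 → PS K 4) 3) (conicGeneratorSyzygies K) := by
  refine exact_cancel_left ?_ (exact_koszulDiff_koszulMatrix isReverseRegular_X) ?_
    splitInr_splitSnd_add_splitInl_splitFst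
  · have hpair := LinearMap.funLeft_injective_of_surjective (PS K 4) (PS K 4) _ pairEquiv.surjective
    exact hpair.comp_exact_iff_exact.mpr (exact_koszulDiff isReverseRegular_X 2)
  · rw [koszulMatrix_comp_splitInl]
    exact conicSyzygy_injective K

/-- The index set of the basis of the `i`-th term of the minimal free resolution of the ideal of the
projected Veronese surface. -/
def ConicResolutionIndex : ℕ → Type
  | 0 => Fin 7
  | i + 1 => KoszulIndex 5 (i + 3)

instance ConicResolutionIndex.instFintype : ∀ i, Fintype (ConicResolutionIndex i)
  | 0 => inferInstanceAs (Fintype (Fin 7))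
  | i + 1 => inferInstanceAs (Fintype (KoszulIndex 5 (i + 3)))

variable (K) in
/-- The differentials of the minimal free resolution of the ideal of the projected Veronese
surface. -/
def conicResolutionDiff : ∀ i,
    (ConicResolutionIndex (i + 1) → PS K 4) →ₗ[PS K 4] (ConicResolutionIndex i → PS K 4)
  | 0 => conicGeneratorSyzygies K
  | i + 1 => koszulDiff X (i + 3)

theorem hasBettiDiagram_ker_aeval_projectedConic {β : ℕ → ℕ → ℕ}
    (hβ : ∀ i j, β (i + 1) j = if j = 2 then Fintype.card (ConicResolutionIndex i) else 0) :
    AMD.HasBettiDiagram K 4 (RingHom.ker (aeval (projectedConic K))) β := by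
  refine hasBettiDiagram_of_linear_resolution (φ := conicResolutionDiff K)
    isHomogeneous_conicGenerators_C ?_ range_conicGenerators
    exact_conicGeneratorSyzygies_conicGenerators ?_ hβ
  · rintro (_ | i)
    exacts [isLinearMatrix_conicGeneratorSyzygies,
      isLinearMatrix_koszulDiff (isHomogeneous_X K) (i + 3)]
  · rintro (_ | i)
    exacts [exact_koszulDiff_conicGeneratorSyzygies, exact_koszulDiff isReverseRegular_X (i + 3)]

end ConicResolution

/-- **Theorem 2.1 (c) (the exceptional case).**  A generic projection `X ⊆ ℙ^4_K` of
the Veronese surface `F ⊆ ℙ^5_K` is a non-degenerate surface of degree `4` and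
codimension `2` with `depth A_X = 1`, its ideal contains no quadric, and its Betti
diagram is `β₁₂ = 7, β₂₂ = 10, β₃₂ = 5, β₄₂ = 1` (all other entries zero). -/
theorem generic_projection_of_veronese_surface
    (K : Type) [Field K] [IsAlgClosed K]
    (I : Ideal (PS K 4)) (hI : AMD.IsGenProjVeronese4 K I) :
    I.IsPrime ∧ AMD.IsHomIdeal K 4 I ∧ AMD.Nondeg K 4 I ∧
    AMD.DimEq K 4 I 2 ∧ AMD.DegreeEq K 4 I 2 4 ∧
    AMD.DepthEq K 4 I 1 ∧
    (∀ p ∈ I, p.IsHomogeneous 2 → p = 0) ∧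
    AMD.HasBettiDiagram K 4 I (fun i j => match i, j with
      | 1, 2 => 7 | 2, 2 => 10 | 3, 2 => 5 | 4, 2 => 1 | _, _ => 0) := by
  obtain ⟨σ, hσ, hσ', rfl⟩ := exists_grAut_ker_eq hI
  have hπ := isConicParametrization_aeval_comp hσ' (by simpa using hσ)
  refine ⟨RingHom.ker_isPrime _, isHomIdeal_ker two_ne_zero hπ.isHomogeneous,
    fun _ hp h => hπ.eq_zero_of_mem_ker one_le_two hp h, dimEq_ker_of_isIntegral hπ.isIntegral,
    hπ.degreeEq_ker, hπ.depthEq_ker, fun _ hp h => hπ.eq_zero_of_mem_ker le_rfl hp h, ?_⟩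
  rw [← map_ker_eq_ker_comp_symm]
  refine hasBettiDiagram_map (hasBettiDiagram_ker_aeval_projectedConic ?_) hσ
  rintro (_ | _ | _ | _ | i) (_ | _ | _ | j) <;> rfl
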